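/- arXiv:2207.05305 — 3 statements merged into one kernel-verified Lean document; each statement's English description precedes it below -/
import Mathlib

section
/- min{ f(x) : (x,y,z,α,β,γ,σ) ∈ P_F } = min{ f(x) : (x,y,z) ∈ P_basic }, i.e., the compact multicommodity-flow formulation P_F has the same optimal objective value as the basic formulation P_basic of the joint order batching and picker routing problem. -/
namespace JOBPRP

/-- Vertices of a rectangular warehouse with `n` picking aisles and `q` blocks
(hence `q + 1` cross-aisles), where subaisle `(i,j)` contains `m i j + 1`
picking locations.  `Sum.inl (i, j)` is the artificial location in cross-aisle
`j` at aisle `i`; `Sum.inr ⟨i, j, k⟩` is the `k`-th picking location (from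
north to south) of subaisle `(i,j)`. -/
abbrev WV (n q : ℕ) (m : Fin n → Fin q → ℕ) : Type :=
  (Fin n × Fin (q + 1)) ⊕ ((i : Fin n) × (j : Fin q) × Fin (m i j + 1))

variable {n q : ℕ} {m : Fin n → Fin q → ℕ}

/-- the artificial location at aisle `i` on cross-aisle `j` -/
def art (i : Fin n) (j : Fin (q + 1)) : WV n q m := Sum.inl (i, j)

/-- the `k`-th picking location of subaisle `(i,j)`; the northern endpoint of
subaisle `(i,j)` is `f (i,j) = art i j.castSucc` and its southern endpoint is
`l (i,j) = art i j.succ` -/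
def pk (i : Fin n) (j : Fin q) (k : Fin (m i j + 1)) : WV n q m := Sum.inr ⟨i, j, k⟩

/-- the set `V_I` of artificial locations -/
def VI : Set (WV n q m) := Set.range fun p : Fin n × Fin (q + 1) => Sum.inl p

/-- the set `V_L` of picking locations -/
def VL : Set (WV n q m) := Set.range Sum.inr

/-- the adjacent northern location `n(v)` of the picking location `pk i j k` -/
def nb (i : Fin n) (j : Fin q) (k : Fin (m i j + 1)) : WV n q m :=
  if (k : ℕ) = 0 then art i j.castSucc
  else pk i j ⟨(k : ℕ) - 1, lt_of_le_of_lt (Nat.sub_le _ _) k.isLt⟩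

/-- the adjacent southern location `s(v)` of the picking location `pk i j k` -/
def sb (i : Fin n) (j : Fin q) (k : Fin (m i j + 1)) : WV n q m :=
  if h : (k : ℕ) = m i j then art i j.succ
  else pk i j ⟨(k : ℕ) + 1, by have hk := k.isLt; omega⟩

/-- the arcs joining neighboring artificial locations within a cross-aisle, in
both directions -/
def crossArcs : Set (WV n q m × WV n q m) :=
  { a | ∃ (i i' : Fin n) (j : Fin (q + 1)), (i' : ℕ) = (i : ℕ) + 1 ∧
      (a = (art i j, art i' j) ∨ a = (art i' j, art i j)) }

/-- the arcs joining neighboring locations within a picking aisle, in both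
directions -/
def subArcs : Set (WV n q m × WV n q m) :=
  { a | ∃ (i : Fin n) (j : Fin q) (k : Fin (m i j + 1)),
      a = (nb i j k, pk i j k) ∨ a = (pk i j k, nb i j k) ∨
      a = (sb i j k, pk i j k) ∨ a = (pk i j k, sb i j k) }

/-- the arc set `Ẽ` of the digraph `G̃` obtained from the warehouse graph by
replacing each edge by two opposite arcs -/
def Etilde : Set (WV n q m × WV n q m) := subArcs ∪ crossArcs

/-- the arc set `Ẽ'` of the reduced graph on the artificial locations: each
subaisle `(i,j)` contributes the two opposite arcs between its endpoints
`f (i,j)` and `l (i,j)`, and each cross-aisle segment contributes two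
opposite arcs -/
def Ered : Set (WV n q m × WV n q m) :=
  { a | ∃ (i : Fin n) (j : Fin q),
      a = (art i j.castSucc, art i j.succ) ∨ a = (art i j.succ, art i j.castSucc) }
    ∪ crossArcs

/-- `δ⁺(S)`: the arcs of `Ẽ` leaving `S` -/
def dplus (S : Set (WV n q m)) : Set (WV n q m × WV n q m) :=
  { a | a ∈ Etilde (m := m) ∧ a.1 ∈ S ∧ a.2 ∉ S }

/-- `δ⁻(S)`: the arcs of `Ẽ` entering `S` -/
def dminus (S : Set (WV n q m)) : Set (WV n q m × WV n q m) :=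
  { a | a ∈ Etilde (m := m) ∧ a.1 ∉ S ∧ a.2 ∈ S }

/-- `η⁺(S)`: the arcs of `Ẽ'` leaving `S` -/
def etaplus (S : Set (WV n q m)) : Set (WV n q m × WV n q m) :=
  { a | a ∈ Ered (m := m) ∧ a.1 ∈ S ∧ a.2 ∉ S }

/-- `η⁻(S)`: the arcs of `Ẽ'` entering `S` -/
def etaminus (S : Set (WV n q m)) : Set (WV n q m × WV n q m) :=
  { a | a ∈ Ered (m := m) ∧ a.1 ∉ S ∧ a.2 ∈ S }

/-- the sum `∑_{a ∈ S} g a` over a set `S` of a finite type -/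
noncomputable def ssum {A : Type*} [Fintype A] (S : Set A) (g : A → ℝ) : ℝ :=
  ∑ a, S.indicator g a

section Formulations

variable (T : ℕ) {O : Type*} [Fintype O]

/-- the objective function `f(x) = ∑_{t ∈ T} ∑_{(u,v) ∈ Ẽ} d_{uv} x_{t,(u,v)}` -/
noncomputable def obj (d : WV n q m → WV n q m → ℝ)
    (x : Fin T → WV n q m × WV n q m → ℝ) : ℝ :=
  ∑ t, ssum (Etilde (m := m)) fun a => d a.1 a.2 * x t a

/-- The basic formulation `P_basic` of the joint order batching and picker
routing problem.  `R` is the domain of the variables (`{0,1}` for the integer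
formulation, `[0,1]` for its LP relaxation), `s0` is the origin, `L o` the set
of picking locations of order `o`, `b o` the size of order `o` and `B` the
capacity of each picker.  Variables indexed by arcs outside `Ẽ` are fixed
to `0`. -/
def Pbasic (R : Set ℝ) (s0 : WV n q m) (L : O → Set (WV n q m)) (b : O → ℝ) (B : ℝ)
    (x : Fin T → WV n q m × WV n q m → ℝ) (y : Fin T → WV n q m → ℝ)
    (z : O → Fin T → ℝ) : Prop :=
  (∀ t a, x t a ∈ R) ∧ (∀ t v, y t v ∈ R) ∧ (∀ o t, z o t ∈ R) ∧
  (∀ t a, a ∉ Etilde (m := m) → x t a = 0) ∧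
  -- each picker leaves the origin
  (∀ t, 1 ≤ ssum (dplus (m := m) {s0}) (x t)) ∧
  -- if picker `t` picks order `o` then it leaves each location of `L o`
  (∀ t (o : O), ∀ u ∈ L o, z o t ≤ ssum (dplus (m := m) {u}) (x t)) ∧
  -- `y` dominates `x` on the arcs leaving `u ∈ V \ {s}`
  (∀ t u v, u ≠ s0 → (u, v) ∈ Etilde (m := m) → x t (u, v) ≤ y t u) ∧
  -- connectivity constraints
  (∀ t (S : Set (WV n q m)), s0 ∉ S → 2 ≤ S.ncard →
    ∀ u0 ∈ S, y t u0 ≤ ssum (dplus (m := m) S) (x t)) ∧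
  -- flow conservation
  (∀ t v, ssum (dplus (m := m) {v}) (x t) = ssum (dminus (m := m) {v}) (x t)) ∧
  -- each order is assigned to exactly one picker
  (∀ o : O, ∑ t, z o t = 1) ∧
  -- capacity constraints
  (∀ t, ∑ o, b o * z o t ≤ B)

/-- The subaisle cuts `P_sub` (constraints (19)–(25)), with auxiliary
variables `α` and `β` on the picking locations. -/
def Psub (R : Set ℝ) (L : O → Set (WV n q m))
    (x : Fin T → WV n q m × WV n q m → ℝ) (z : O → Fin T → ℝ)
    (α β : Fin T → WV n q m → ℝ) : Prop :=
  (∀ t v, α t v ∈ R) ∧ (∀ t v, β t v ∈ R) ∧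
  -- α_{t v} ≥ α_{t s(v)} for every picking location except the southernmost
  (∀ t i j (k : Fin (m i j + 1)), (k : ℕ) ≠ m i j →
    α t (sb i j k) ≤ α t (pk i j k)) ∧
  -- x_{t (n(v), v)} ≥ α_{t v}
  (∀ t i j (k : Fin (m i j + 1)), α t (pk i j k) ≤ x t (nb i j k, pk i j k)) ∧
  -- β_{t v} ≥ β_{t n(v)} for every picking location except the northernmost
  (∀ t i j (k : Fin (m i j + 1)), (k : ℕ) ≠ 0 →
    β t (nb i j k) ≤ β t (pk i j k)) ∧
  -- x_{t (s(v), v)} ≥ β_{t v}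
  (∀ t i j (k : Fin (m i j + 1)), β t (pk i j k) ≤ x t (sb i j k, pk i j k)) ∧
  -- α_{t v} + β_{t v} ≥ z_{o t} for all picking locations of order `o`
  (∀ t (o : O), ∀ v ∈ L o, z o t ≤ α t v + β t v)

/-- The formulation `P_g` (constraints (26)–(42)), which forces all visited
artificial locations into the connected component of the origin via the
auxiliary variables `γ` on the arcs of the reduced graph `Ẽ'`. -/
def Pg (R : Set ℝ) (s0 : WV n q m) (L : O → Set (WV n q m)) (b : O → ℝ) (B : ℝ)
    (x : Fin T → WV n q m × WV n q m → ℝ) (y : Fin T → WV n q m → ℝ)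
    (z : O → Fin T → ℝ) (α β : Fin T → WV n q m → ℝ)
    (γ : Fin T → WV n q m × WV n q m → ℝ) : Prop :=
  (∀ t a, x t a ∈ R) ∧ (∀ t v, y t v ∈ R) ∧ (∀ o t, z o t ∈ R) ∧
  (∀ t a, γ t a ∈ R) ∧
  (∀ t a, a ∉ Etilde (m := m) → x t a = 0) ∧
  (∀ t a, a ∉ Ered (m := m) → γ t a = 0) ∧
  -- each picker leaves the origin
  (∀ t, 1 ≤ ssum (dplus (m := m) {s0}) (x t)) ∧
  -- if picker `t` picks order `o` then it leaves each location of `L o`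
  (∀ t (o : O), ∀ u ∈ L o, z o t ≤ ssum (dplus (m := m) {u}) (x t)) ∧
  -- `y` dominates `x` on the arcs leaving an artificial location `u ≠ s`
  (∀ t u v, u ∈ VI (m := m) → u ≠ s0 → (u, v) ∈ Etilde (m := m) →
    x t (u, v) ≤ y t u) ∧
  -- x = γ on the cross-aisle arcs
  (∀ t a, a ∈ crossArcs (m := m) → x t a = γ t a) ∧
  -- α_{t n(l(i))} ≥ γ_{t (f(i), l(i))}
  (∀ t i j, γ t (art i (Fin.castSucc j), art i (Fin.succ j)) ≤
    α t (pk i j (Fin.last (m i j)))) ∧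
  -- x_{t (n(l(i)), l(i))} ≥ γ_{t (f(i), l(i))}
  (∀ t i j, γ t (art i (Fin.castSucc j), art i (Fin.succ j)) ≤
    x t (pk i j (Fin.last (m i j)), art i (Fin.succ j))) ∧
  -- β_{t s(f(i))} ≥ γ_{t (l(i), f(i))}
  (∀ t i j, γ t (art i (Fin.succ j), art i (Fin.castSucc j)) ≤ β t (pk i j 0)) ∧
  -- x_{t (s(f(i)), f(i))} ≥ γ_{t (l(i), f(i))}
  (∀ t i j, γ t (art i (Fin.succ j), art i (Fin.castSucc j)) ≤
    x t (pk i j 0, art i (Fin.castSucc j))) ∧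
  -- connectivity cuts on the reduced graph
  (∀ t (S : Set (WV n q m)), S ⊆ VI (m := m) → s0 ∉ S → 2 ≤ S.ncard →
    ∀ u0 ∈ S, y t u0 ≤ ssum (etaplus (m := m) S) (γ t)) ∧
  -- flow conservation
  (∀ t v, ssum (dplus (m := m) {v}) (x t) = ssum (dminus (m := m) {v}) (x t)) ∧
  -- each order is assigned to exactly one picker
  (∀ o : O, ∑ t, z o t = 1) ∧
  -- capacity constraints
  (∀ t, ∑ o, b o * z o t ≤ B)

/-- The flow-based formulation `P_f` (constraints (26)–(34) and (36)–(46)):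
the cut constraints of `P_g` are replaced by an auxiliary multicommodity flow
`σ` on the reduced graph, one commodity for each artificial location `v0`. -/
def Pf (R : Set ℝ) (s0 : WV n q m) (L : O → Set (WV n q m)) (b : O → ℝ) (B : ℝ)
    (x : Fin T → WV n q m × WV n q m → ℝ) (y : Fin T → WV n q m → ℝ)
    (z : O → Fin T → ℝ) (α β : Fin T → WV n q m → ℝ)
    (γ : Fin T → WV n q m × WV n q m → ℝ)
    (σ : Fin T → WV n q m → WV n q m × WV n q m → ℝ) : Prop :=
  (∀ t a, x t a ∈ R) ∧ (∀ t v, y t v ∈ R) ∧ (∀ o t, z o t ∈ R) ∧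
  (∀ t a, γ t a ∈ R) ∧
  (∀ t a, a ∉ Etilde (m := m) → x t a = 0) ∧
  (∀ t a, a ∉ Ered (m := m) → γ t a = 0) ∧
  (∀ t, 1 ≤ ssum (dplus (m := m) {s0}) (x t)) ∧
  (∀ t (o : O), ∀ u ∈ L o, z o t ≤ ssum (dplus (m := m) {u}) (x t)) ∧
  (∀ t u v, u ∈ VI (m := m) → u ≠ s0 → (u, v) ∈ Etilde (m := m) →
    x t (u, v) ≤ y t u) ∧
  (∀ t a, a ∈ crossArcs (m := m) → x t a = γ t a) ∧
  (∀ t i j, γ t (art i (Fin.castSucc j), art i (Fin.succ j)) ≤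
    α t (pk i j (Fin.last (m i j)))) ∧
  (∀ t i j, γ t (art i (Fin.castSucc j), art i (Fin.succ j)) ≤
    x t (pk i j (Fin.last (m i j)), art i (Fin.succ j))) ∧
  (∀ t i j, γ t (art i (Fin.succ j), art i (Fin.castSucc j)) ≤ β t (pk i j 0)) ∧
  (∀ t i j, γ t (art i (Fin.succ j), art i (Fin.castSucc j)) ≤
    x t (pk i j 0, art i (Fin.castSucc j))) ∧
  (∀ t v, ssum (dplus (m := m) {v}) (x t) = ssum (dminus (m := m) {v}) (x t)) ∧
  (∀ o : O, ∑ t, z o t = 1) ∧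
  (∀ t, ∑ o, b o * z o t ≤ B) ∧
  -- the commodity of `v0` has net outflow `y_{t,v0}` at `v0`
  (∀ t v0, v0 ∈ VI (m := m) →
    ssum (etaplus (m := m) {v0}) (σ t v0) -
      ssum (etaminus (m := m) {v0}) (σ t v0) = y t v0) ∧
  -- flow conservation at every other artificial location `u ∉ {s, v0}`
  (∀ t v0 u, v0 ∈ VI (m := m) → u ∈ VI (m := m) → u ≠ s0 → u ≠ v0 →
    ssum (etaplus (m := m) {u}) (σ t v0) -
      ssum (etaminus (m := m) {u}) (σ t v0) = 0) ∧
  -- the commodity of `v0` has net outflow `-y_{t,v0}` at the origin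
  (∀ t v0, v0 ∈ VI (m := m) →
    ssum (etaplus (m := m) {s0}) (σ t v0) -
      ssum (etaminus (m := m) {s0}) (σ t v0) = -(y t v0)) ∧
  -- the flow is nonnegative and bounded by γ on the arcs of `Ẽ'`
  (∀ t v0 a, v0 ∈ VI (m := m) → a ∈ Ered (m := m) →
    0 ≤ σ t v0 a ∧ σ t v0 a ≤ γ t a) ∧
  (∀ t v0 a, a ∉ Ered (m := m) → σ t v0 a = 0) ∧
  (∀ t v0 a, v0 ∉ VI (m := m) → σ t v0 a = 0)

/-!
Both formulations describe the same plans up to circulations away from the origin `s0`. The cut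
constraints of `P_basic` say that every arc of a route is reachable from `s0`. In `P_F` the flow
`σ^{v0}` yields a way from each visited artificial location `v0` back to `s0`, and `α`, `β` connect
each picked location to an endpoint of its subaisle; hence deleting the components of a route that
avoid `s0` loses no picked location, and it does not increase the cost. Conversely, a route
through `s0` enters each subaisle at an endpoint, so the first visit to a location is by a straight
way from that endpoint. This supplies `α` and `β`, and it turns the way from `v0` to `s0` into a
path in the reduced graph, along which one unit of flow is sent.
-/

section Flow

variable {V K : Type*}

/-- Reachability along the arcs of `A`. -/
abbrev Reach (A : Set (V × V)) : V → V → Prop :=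
  Relation.ReflTransGen fun u w => (u, w) ∈ A

theorem Reach.exists_arc_leaving {A : Set (V × V)} {u v : V} (h : Reach A u v) {S : Set V}
    (hu : u ∈ S) (hv : v ∉ S) : ∃ a ∈ A, a.1 ∈ S ∧ a.2 ∉ S ∧ Reach A u a.1 := by
  induction h with
  | refl => exact absurd hu hv
  | @tail b c hub hbc ih =>
    by_cases hb : b ∈ S
    · exact ⟨(b, c), hbc, hb, hv, hub⟩
    · exact ih hb

theorem Reach.exists_nodup_isChain {A : Set (V × V)} {u v : V} (h : Reach A u v) :
    ∃ l : List V, (u :: l).Nodup ∧ (u :: l).IsChain (fun a b => (a, b) ∈ A) ∧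
      (u :: l).getLast (List.cons_ne_nil u l) = v := by
  induction h using Relation.ReflTransGen.head_induction_on with
  | refl => exact ⟨[], by simp⟩
  | @head u w huw _ ih =>
    obtain ⟨l, hnodup, hchain, hlast⟩ := ih
    by_cases hu : u ∈ w :: l
    · obtain ⟨l₁, l₂, hl⟩ := List.append_of_mem hu
      have hsuffix : u :: l₂ <:+ w :: l := ⟨l₁, hl.symm⟩
      refine ⟨l₂, hnodup.sublist hsuffix.sublist, hchain.suffix hsuffix, ?_⟩
      rw [← hlast, hsuffix.getLast]
    · exact ⟨w :: l, List.nodup_cons.2 ⟨hu, hnodup⟩, .cons_cons huw hchain,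
        by rwa [List.getLast_cons_cons]⟩

section NetOutflow

variable [Fintype V] [AddCommGroup K]

/-- The net outflow (divergence) at `v` of an arc function `g` on the complete digraph on `V`. -/
def netOutflow (g : V × V → K) (v : V) : K := ∑ w, g (v, w) - ∑ w, g (w, v)

theorem netOutflow_zero : netOutflow (0 : V × V → K) = 0 := by
  ext v
  simp [netOutflow]

theorem netOutflow_add (g h : V × V → K) : netOutflow (g + h) = netOutflow g + netOutflow h := by
  ext v
  simp only [netOutflow, Pi.add_apply, Finset.sum_add_distrib]
  abel

theorem netOutflow_single [DecidableEq V] (u w : V) (c : K) :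
    netOutflow (Pi.single (u, w) c) = Pi.single u c - Pi.single w c := by
  ext v
  simp [netOutflow, Pi.single_apply, ite_and, Finset.sum_ite_irrel]

theorem sum_netOutflow [DecidableEq V] (g : V × V → K) (C : Finset V) :
    ∑ u ∈ C, netOutflow g u =
      ∑ u ∈ C, ∑ w ∈ Cᶜ, g (u, w) - ∑ u ∈ C, ∑ w ∈ Cᶜ, g (w, u) := by
  have hinner : ∑ u ∈ C, ∑ w ∈ C, g (u, w) = ∑ u ∈ C, ∑ w ∈ C, g (w, u) := Finset.sum_comm
  simp only [netOutflow, ← Finset.sum_add_sum_compl C, Finset.sum_sub_distrib,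
    Finset.sum_add_distrib, hinner]
  abel

theorem sum_netOutflow_eq_neg_of_closed [DecidableEq V] {g : V × V → K} {C : Finset V}
    (hC : ∀ a ∈ Function.support g, a.1 ∈ C → a.2 ∈ C) :
    ∑ u ∈ C, netOutflow g u = -∑ u ∈ C, ∑ w ∈ Cᶜ, g (w, u) := by
  have hout : ∑ u ∈ C, ∑ w ∈ Cᶜ, g (u, w) = 0 :=
    Finset.sum_eq_zero fun u hu => Finset.sum_eq_zero fun w hw =>
      by_contra fun h => Finset.mem_compl.1 hw (hC (u, w) h hu)
  rw [sum_netOutflow, hout, zero_sub]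

theorem netOutflow_indicator_fst_mem {g : V × V → K} {C : Set V}
    (hC : ∀ a ∈ Function.support g, a.1 ∈ C ↔ a.2 ∈ C) :
    netOutflow ({a : V × V | a.1 ∈ C}.indicator g) = C.indicator (netOutflow g) := by
  classical
  have hsnd : {a : V × V | a.1 ∈ C}.indicator g = {a : V × V | a.2 ∈ C}.indicator g := by
    ext a
    by_cases ha : g a = 0
    · simp [Set.indicator_apply, ha]
    · simp [Set.indicator_apply, hC a ha]
  ext v
  simp only [netOutflow]
  conv_lhs => enter [2, 2, w]; rw [hsnd]
  by_cases hv : v ∈ C <;> simp [hv, netOutflow]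

theorem exists_netOutflow_indicator_of_isChain [DecidableEq V] [One K] {A : Set (V × V)} {v : V}
    {l : List V} (hnodup : (v :: l).Nodup) (hchain : (v :: l).IsChain fun a b => (a, b) ∈ A) :
    ∃ P ⊆ A, (∀ a ∈ P, a.1 ∈ v :: l) ∧ netOutflow (P.indicator (1 : V × V → K)) =
      Pi.single v 1 - Pi.single ((v :: l).getLast (List.cons_ne_nil v l)) 1 := by
  induction l generalizing v with
  | nil =>
    refine ⟨∅, Set.empty_subset A, fun a ha => ha.elim, ?_⟩
    rw [Set.indicator_empty', netOutflow_zero, List.getLast_singleton, sub_self]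
  | cons w l ih =>
    obtain ⟨hv, htail⟩ := List.nodup_cons.1 hnodup
    obtain ⟨hvw, hchain⟩ := List.isChain_cons_cons.1 hchain
    obtain ⟨P, hPA, hPfst, hPnet⟩ := ih htail hchain
    have hvP : (v, w) ∉ P := fun h => hv (hPfst _ h)
    have hsplit : (insert (v, w) P).indicator (1 : V × V → K) =
        Pi.single (v, w) 1 + P.indicator 1 := by
      rw [Set.insert_eq, Set.indicator_union_of_disjoint (Set.disjoint_singleton_left.2 hvP),
        Set.indicator_singleton]
      rfl
    refine ⟨insert (v, w) P, Set.insert_subset hvw hPA, ?_, ?_⟩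
    · rintro a (rfl | ha)
      · exact List.mem_cons_self
      · exact List.mem_cons_of_mem v (hPfst a ha)
    · rw [hsplit, netOutflow_add, netOutflow_single, hPnet, List.getLast_cons_cons,
        sub_add_sub_cancel]

theorem Reach.exists_netOutflow_indicator [DecidableEq V] [One K] {A : Set (V × V)} {v s : V}
    (h : Reach A v s) :
    ∃ P ⊆ A, netOutflow (P.indicator (1 : V × V → K)) = Pi.single v 1 - Pi.single s 1 := by
  obtain ⟨l, hnodup, hchain, rfl⟩ := h.exists_nodup_isChain
  obtain ⟨P, hPA, -, hPnet⟩ := exists_netOutflow_indicator_of_isChain (K := K) hnodup hchain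
  exact ⟨P, hPA, hPnet⟩

end NetOutflow

section Order

variable [Fintype V] [AddCommGroup K] [PartialOrder K] [IsOrderedAddMonoid K]
  {g : V × V → K} {u v s : V}

theorem fst_mem_of_snd_mem_of_circulation (hg : 0 ≤ g) (hcirc : netOutflow g = 0) {C : Finset V}
    (hC : ∀ a ∈ Function.support g, a.1 ∈ C → a.2 ∈ C) {a : V × V}
    (ha : a ∈ Function.support g) (hsnd : a.2 ∈ C) : a.1 ∈ C := by
  classical
  by_contra hfst
  have hin : ∑ u ∈ C, ∑ w ∈ Cᶜ, g (w, u) = 0 := by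
    simpa [hcirc] using sum_netOutflow_eq_neg_of_closed hC
  have hinner := (Finset.sum_eq_zero_iff_of_nonneg fun u _ =>
    Finset.sum_nonneg fun w _ => hg (w, u)).1 hin a.2 hsnd
  exact ha ((Finset.sum_eq_zero_iff_of_nonneg fun w _ => hg (w, a.2)).1 hinner a.1
    (Finset.mem_compl.2 hfst))

theorem Reach.symm_of_circulation (hg : 0 ≤ g) (hcirc : netOutflow g = 0)
    (h : Reach (Function.support g) u v) : Reach (Function.support g) v u := by
  classical
  induction h with
  | refl => exact .refl
  | @tail b c _ hbc ih =>
    have hclosed : ∀ a ∈ Function.support g,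
        a.1 ∈ Finset.univ.filter (Reach (Function.support g) c) →
          a.2 ∈ Finset.univ.filter (Reach (Function.support g) c) := fun a ha hfst =>
      Finset.mem_filter.2 ⟨Finset.mem_univ a.2, (Finset.mem_filter.1 hfst).2.tail ha⟩
    have hb := fst_mem_of_snd_mem_of_circulation hg hcirc hclosed hbc
      (Finset.mem_filter.2 ⟨Finset.mem_univ c, .refl⟩)
    exact (Finset.mem_filter.1 hb).2.trans ih

theorem reach_of_netOutflow_pos (hg : 0 ≤ g) (hv : 0 < netOutflow g v)
    (hcons : ∀ u, u ≠ v → u ≠ s → netOutflow g u = 0) : Reach (Function.support g) v s := by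
  classical
  by_contra hs
  let C := Finset.univ.filter (Reach (Function.support g) v)
  have hsum : ∑ u ∈ C, netOutflow g u = netOutflow g v := by
    refine Finset.sum_eq_single v (fun u hu huv => hcons u huv ?_) (fun h => ?_)
    · rintro rfl
      exact hs (Finset.mem_filter.1 hu).2
    · exact absurd (Finset.mem_filter.2 ⟨Finset.mem_univ v, .refl⟩) h
  have hclosed : ∀ a ∈ Function.support g, a.1 ∈ C → a.2 ∈ C := fun a ha hfst =>
    Finset.mem_filter.2 ⟨Finset.mem_univ a.2, (Finset.mem_filter.1 hfst).2.tail ha⟩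
  rw [← hsum, sum_netOutflow_eq_neg_of_closed hclosed, neg_pos] at hv
  exact hv.not_ge (Finset.sum_nonneg fun u _ => Finset.sum_nonneg fun w _ => hg (w, u))

end Order

end Flow

section SetSum

variable {A V : Type*} [Fintype A] [Fintype V] {S : Set A} {g h : A → ℝ} {a : A}

theorem ssum_nonneg (hg : 0 ≤ g) : 0 ≤ ssum S g :=
  Finset.sum_nonneg fun a _ => Set.indicator_nonneg (fun a _ => hg a) a

theorem le_ssum_of_mem (hg : 0 ≤ g) (ha : a ∈ S) : g a ≤ ssum S g := by
  rw [← Set.indicator_of_mem ha g]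
  exact Finset.single_le_sum (fun a _ => Set.indicator_nonneg (fun a _ => hg a) a)
    (Finset.mem_univ a)

theorem exists_mem_support_of_ssum_ne_zero (h : ssum S g ≠ 0) :
    ∃ a ∈ S, a ∈ Function.support g := by
  obtain ⟨a, -, ha⟩ := Finset.exists_ne_zero_of_sum_ne_zero h
  exact ⟨a, Set.indicator_apply_ne_zero.1 ha⟩

theorem ssum_congr (hgh : ∀ a ∈ S, g a = h a) : ssum S g = ssum S h :=
  congrArg (fun f : A → ℝ => ∑ a, f a) (Set.indicator_congr hgh)

theorem ssum_mono (hgh : ∀ a ∈ S, g a ≤ h a) : ssum S g ≤ ssum S h :=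
  Finset.sum_le_sum fun _ _ => Set.indicator_le_indicator' (hgh _)

theorem ssum_leaving_sub_ssum_entering {E : Set (V × V)} {g : V × V → ℝ}
    (hg : ∀ a ∉ E, g a = 0) (v : V) :
    ssum {a | a ∈ E ∧ a.1 ∈ ({v} : Set V) ∧ a.2 ∉ ({v} : Set V)} g -
      ssum {a | a ∈ E ∧ a.1 ∉ ({v} : Set V) ∧ a.2 ∈ ({v} : Set V)} g = netOutflow g v := by
  classical
  have hterm (a : V × V) :
      {a | a ∈ E ∧ a.1 ∈ ({v} : Set V) ∧ a.2 ∉ ({v} : Set V)}.indicator g a -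
        {a | a ∈ E ∧ a.1 ∉ ({v} : Set V) ∧ a.2 ∈ ({v} : Set V)}.indicator g a =
      (if a.1 = v then g a else 0) - if a.2 = v then g a else 0 := by
    by_cases ha : a ∈ E
    · by_cases h₁ : a.1 = v <;> by_cases h₂ : a.2 = v <;> simp [ha, h₁, h₂]
    · simp [Set.indicator_apply, hg a ha]
  simp only [ssum, netOutflow, ← Finset.sum_sub_distrib, hterm]
  rw [Finset.sum_sub_distrib, Fintype.sum_prod_type_right, Fintype.sum_prod_type]
  simp

end SetSum

section Warehouse

variable {i : Fin n} {j : Fin q} {p r : ℕ} {A : Set (WV n q m × WV n q m)} {u v w : WV n q m}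

/-- The location at position `p` of subaisle `(i, j)`, counted from north to south: position `0` is
the northern endpoint, position `k + 1` the `k`-th picking location, and position `m i j + 2` (like
every position beyond it) the southern endpoint. -/
def loc (i : Fin n) (j : Fin q) : ℕ → WV n q m
  | 0 => art i j.castSucc
  | p + 1 => if h : p < m i j + 1 then pk i j ⟨p, h⟩ else art i j.succ

theorem loc_zero : loc (m := m) i j 0 = art i j.castSucc := rfl

theorem loc_val_succ (k : Fin (m i j + 1)) : loc (m := m) i j (k + 1) = pk i j k := dif_pos k.isLt

theorem loc_last : loc (m := m) i j (m i j + 2) = art i j.succ := dif_neg (lt_irrefl _)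

theorem nb_eq_loc (k : Fin (m i j + 1)) : nb i j k = loc i j k := by
  obtain ⟨_ | k, hk⟩ := k
  · rfl
  · simp [nb, loc, Nat.lt_of_succ_lt hk]

theorem sb_eq_loc (k : Fin (m i j + 1)) : sb i j k = loc i j (k + 2) := by
  obtain ⟨k, hk⟩ := k
  by_cases hlast : k = m i j
  · subst hlast
    simp [sb, loc_last]
  · simp [sb, loc, hlast, show k < m i j by omega]

theorem loc_ne_loc_succ (hp : p < m i j + 2) : loc (m := m) i j p ≠ loc i j (p + 1) := by
  obtain _ | p := p
  · simp [loc, art, pk]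
  · simp only [loc]
    split_ifs <;> first | omega | simp [art, pk]

theorem mem_subArcs {a : WV n q m × WV n q m} :
    a ∈ subArcs ↔ ∃ i j p, p < m i j + 2 ∧
      (a = (loc i j p, loc i j (p + 1)) ∨ a = (loc i j (p + 1), loc i j p)) := by
  simp only [subArcs, Set.mem_ofPred_eq, nb_eq_loc, sb_eq_loc, ← loc_val_succ]
  constructor
  · rintro ⟨i, j, k, h⟩
    have hk := k.isLt
    rcases h with h | h | h | h
    · exact ⟨i, j, k, by omega, .inl h⟩
    · exact ⟨i, j, k, by omega, .inr h⟩
    · exact ⟨i, j, k + 1, by omega, .inr h⟩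
    · exact ⟨i, j, k + 1, by omega, .inl h⟩
  · rintro ⟨i, j, p, hp, h⟩
    obtain hp | rfl := Nat.lt_succ_iff_lt_or_eq.1 hp
    · exact ⟨i, j, ⟨p, hp⟩, h.imp_right .inl⟩
    · exact ⟨i, j, Fin.last _, .inr (.inr h.symm)⟩

theorem fst_ne_snd_of_mem_Etilde {a : WV n q m × WV n q m} (ha : a ∈ Etilde) : a.1 ≠ a.2 := by
  rcases ha with ha | ⟨i, i', j, hii', rfl | rfl⟩
  · obtain ⟨i, j, p, hp, rfl | rfl⟩ := mem_subArcs.1 ha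
    exacts [loc_ne_loc_succ hp, (loc_ne_loc_succ hp).symm]
  all_goals simp [art, Fin.ext_iff, hii']

/-- The arcs of `A` contain the whole way south from the northern endpoint of subaisle `(i, j)` to
position `p`. For `A` the support of `x`, this is what `α` records at a picking location. -/
def DescendsTo (A : Set (WV n q m × WV n q m)) (i : Fin n) (j : Fin q) (p : ℕ) : Prop :=
  ∀ r < p, (loc i j r, loc i j (r + 1)) ∈ A

/-- The arcs of `A` contain the whole way north from the southern endpoint of subaisle `(i, j)` to
position `p`. For `A` the support of `x`, this is what `β` records at a picking location. -/
def AscendsTo (A : Set (WV n q m × WV n q m)) (i : Fin n) (j : Fin q) (p : ℕ) : Prop :=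
  ∀ r, p ≤ r → r < m i j + 2 → (loc i j (r + 1), loc i j r) ∈ A

theorem DescendsTo.mono (h : DescendsTo A i j p) (hrp : r ≤ p) : DescendsTo A i j r :=
  fun r' hr' => h r' (hr'.trans_le hrp)

theorem AscendsTo.mono (h : AscendsTo A i j p) (hpr : p ≤ r) : AscendsTo A i j r :=
  fun r' hr' => h r' (hpr.trans hr')

theorem DescendsTo.succ (h : DescendsTo A i j p) (harc : (loc i j p, loc i j (p + 1)) ∈ A) :
    DescendsTo A i j (p + 1) :=
  fun r hr => (Nat.lt_succ_iff_lt_or_eq.1 hr).elim (h r) fun hrp => hrp ▸ harc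

theorem AscendsTo.of_succ (h : AscendsTo A i j (p + 1)) (harc : (loc i j (p + 1), loc i j p) ∈ A) :
    AscendsTo A i j p :=
  fun r hpr hr => hpr.eq_or_lt.elim (fun hpr => hpr ▸ harc) (h r · hr)

theorem DescendsTo.reach (h : DescendsTo A i j p) : Reach A (art i j.castSucc) (loc i j p) := by
  induction p with
  | zero => exact .refl
  | succ p ih => exact (ih (h.mono p.le_succ)).tail (h p p.lt_succ_self)

theorem AscendsTo.reach (h : AscendsTo A i j p) (hp : p ≤ m i j + 2) :
    Reach A (art i j.succ) (loc i j p) := by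
  refine Nat.decreasingInduction' (P := fun r => Reach A (art i j.succ) (loc i j r))
    (fun r hr hpr ih => ih.tail (h r hpr hr)) hp ?_
  rw [loc_last]

/-- The arcs of `Ẽ'` that `A` realises: cross-aisle arcs of `A`, and subaisles traversed entirely
by arcs of `A`. -/
def reducedArcs (A : Set (WV n q m × WV n q m)) : Set (WV n q m × WV n q m) :=
  crossArcs ∩ A ∪
    { a | ∃ i j, a = (art i j.castSucc, art i j.succ) ∧ DescendsTo A i j (m i j + 2) ∨
      a = (art i j.succ, art i j.castSucc) ∧ AscendsTo A i j 0 }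

theorem reducedArcs_subset_Ered : reducedArcs A ⊆ Ered := by
  rintro a (ha | ⟨i, j, ha⟩)
  · exact .inr ha.1
  · exact .inl ⟨i, j, ha.imp And.left And.left⟩

theorem mem_reducedArcs_of_mem_crossArcs {a : WV n q m × WV n q m} (ha : a ∈ crossArcs) :
    a ∈ reducedArcs A ↔ a ∈ A := by
  refine ⟨?_, fun h => .inl ⟨ha, h⟩⟩
  obtain ⟨i, i', j, hii', ha⟩ := ha
  rintro (h | ⟨_, _, ⟨h, -⟩ | ⟨h, -⟩⟩)
  · exact h.2
  all_goals
    simp only [h, art, Prod.mk.injEq, Sum.inl.injEq] at ha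
    omega

theorem descend_mem_reducedArcs :
    (art i j.castSucc, art i j.succ) ∈ reducedArcs A ↔ DescendsTo A i j (m i j + 2) := by
  refine ⟨?_, fun h => .inr ⟨i, j, .inl ⟨rfl, h⟩⟩⟩
  rintro (⟨⟨i', i'', j', hi, h⟩, -⟩ | ⟨i', j', ⟨h, hd⟩ | ⟨h, -⟩⟩)
  · simp [art, Fin.ext_iff] at h
    omega
  · simp only [art, Prod.mk.injEq, Sum.inl.injEq, Fin.castSucc_inj, Fin.succ_inj, and_self] at h
    obtain ⟨rfl, rfl⟩ := h
    exact hd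
  · simp [art, Fin.ext_iff] at h
    omega

theorem ascend_mem_reducedArcs :
    (art i j.succ, art i j.castSucc) ∈ reducedArcs A ↔ AscendsTo A i j 0 := by
  refine ⟨?_, fun h => .inr ⟨i, j, .inr ⟨rfl, h⟩⟩⟩
  rintro (⟨⟨i', i'', j', hi, h⟩, -⟩ | ⟨i', j', ⟨h, -⟩ | ⟨h, ha⟩⟩)
  · simp [art, Fin.ext_iff] at h
    omega
  · simp [art, Fin.ext_iff] at h
    omega
  · simp only [art, Prod.mk.injEq, Sum.inl.injEq, Fin.castSucc_inj, Fin.succ_inj, and_self] at h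
    obtain ⟨rfl, rfl⟩ := h
    exact ha

theorem Reach.of_reducedArcs (h : Reach (reducedArcs A) u v) : Reach A u v := by
  refine Relation.reflTransGen_closed ?_ u v h
  rintro u v (huv | ⟨i, j, ⟨huv, hdesc⟩ | ⟨huv, hasc⟩⟩)
  · exact .single huv.2
  · obtain ⟨rfl, rfl⟩ := Prod.mk.inj huv
    simpa only [loc_last] using hdesc.reach
  · obtain ⟨rfl, rfl⟩ := Prod.mk.inj huv
    exact hasc.reach (Nat.zero_le _)

/-- Reachability from `u` by a walk that never turns around inside a subaisle: artificial locations
are reached along `reducedArcs A`, and a picking location is reached by a straight way from an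
endpoint of its subaisle so reached. -/
def StraightReach (A : Set (WV n q m × WV n q m)) (u : WV n q m) : WV n q m → Prop
  | .inl p => Reach (reducedArcs A) u (.inl p)
  | .inr ⟨i, j, k⟩ =>
    Reach (reducedArcs A) u (art i j.castSucc) ∧ DescendsTo A i j (k + 1) ∨
      Reach (reducedArcs A) u (art i j.succ) ∧ AscendsTo A i j (k + 1)

theorem straightReach_loc (hp : p ≤ m i j + 2) :
    StraightReach A u (loc i j p) ↔
      Reach (reducedArcs A) u (art i j.castSucc) ∧ DescendsTo A i j p ∨
        Reach (reducedArcs A) u (art i j.succ) ∧ AscendsTo A i j p := by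
  obtain _ | p := p
  · constructor
    · exact fun h => .inl ⟨h, fun r hr => absurd hr (Nat.not_lt_zero r)⟩
    · rintro (⟨h, -⟩ | ⟨h, hasc⟩)
      exacts [h, h.tail (ascend_mem_reducedArcs.2 hasc)]
  · obtain hp | rfl : p < m i j + 1 ∨ p = m i j + 1 := by omega
    · rw [loc_val_succ ⟨p, hp⟩]
      rfl
    · rw [loc_last]
      constructor
      · exact fun h => .inr ⟨h, fun r hpr hr => absurd hr hpr.not_gt⟩
      · rintro (⟨h, hdesc⟩ | ⟨h, -⟩)
        exacts [h.tail (descend_mem_reducedArcs.2 hdesc), h]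

theorem StraightReach.tail (h : StraightReach A u v) (hA : A ⊆ Etilde) (hvw : (v, w) ∈ A) :
    StraightReach A u w := by
  rcases hA hvw with hsub | hcross
  · obtain ⟨i, j, p, hp, hvw' | hvw'⟩ := mem_subArcs.1 hsub <;>
      obtain ⟨rfl, rfl⟩ := Prod.mk.inj hvw'
    · rw [straightReach_loc hp.le] at h
      exact (straightReach_loc hp).2
        (h.imp (And.imp_right (·.succ hvw)) (And.imp_right (·.mono p.le_succ)))
    · rw [straightReach_loc hp] at h
      exact (straightReach_loc hp.le).2
        (h.imp (And.imp_right (·.mono p.le_succ)) (And.imp_right (·.of_succ hvw)))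
  · have hred := (mem_reducedArcs_of_mem_crossArcs hcross).2 hvw
    obtain ⟨i, i', j, -, hvw' | hvw'⟩ := hcross <;> obtain ⟨rfl, rfl⟩ := Prod.mk.inj hvw' <;>
      exact Relation.ReflTransGen.tail h hred

theorem Reach.straightReach (hA : A ⊆ Etilde) (hu : u ∈ VI) (h : Reach A u v) :
    StraightReach A u v := by
  induction h with
  | refl =>
    obtain ⟨p, rfl⟩ := hu
    exact .refl
  | tail _ hvw ih => exact ih.tail hA hvw

theorem Reach.to_reducedArcs (hA : A ⊆ Etilde) (hu : u ∈ VI) (hv : v ∈ VI) (h : Reach A u v) :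
    Reach (reducedArcs A) u v := by
  obtain ⟨p, rfl⟩ := hv
  exact h.straightReach hA hu

end Warehouse

section Routes

variable {s0 u v : WV n q m} {a : WV n q m × WV n q m} {S : Set (WV n q m)}
  {x g : WV n q m × WV n q m → ℝ}

theorem nonneg_of_mem_zero_one {r : ℝ} (h : r ∈ ({0, 1} : Set ℝ)) : 0 ≤ r := by
  rcases h with rfl | rfl
  exacts [le_rfl, zero_le_one]

theorem eq_one_of_mem_zero_one {r : ℝ} (h : r ∈ ({0, 1} : Set ℝ)) (hr : r ≠ 0) : r = 1 :=
  h.resolve_left hr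

theorem indicator_one_mem_zero_one {A : Type*} (S : Set A) (a : A) :
    S.indicator (1 : A → ℝ) a ∈ ({0, 1} : Set ℝ) :=
  Set.indicator_eq_zero_or_self S 1 a

theorem indicator_one_le_indicator_one {A A' : Type*} {S : Set A} {S' : Set A'} {a : A} {a' : A'}
    (h : a ∈ S → a' ∈ S') : S.indicator (1 : A → ℝ) a ≤ S'.indicator 1 a' :=
  Set.indicator_apply_le' (fun ha => (Set.indicator_of_mem (h ha) 1).ge)
    fun _ => Set.indicator_nonneg (fun _ _ => zero_le_one) a'

theorem ssum_dplus_sub_ssum_dminus (hg : ∀ a ∉ Etilde, g a = 0) (v : WV n q m) :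
    ssum (dplus {v}) g - ssum (dminus {v}) g = netOutflow g v :=
  ssum_leaving_sub_ssum_entering hg v

theorem ssum_etaplus_sub_ssum_etaminus (hg : ∀ a ∉ Ered, g a = 0) (v : WV n q m) :
    ssum (etaplus {v}) g - ssum (etaminus {v}) g = netOutflow g v :=
  ssum_leaving_sub_ssum_entering hg v

/-- A binary circulation on `Ẽ`, as prescribed for the arc variables `x_t` of a single picker. It
may have several connected components. -/
structure IsRoute (x : WV n q m × WV n q m → ℝ) : Prop where
  mem_zero_one : ∀ a, x a ∈ ({0, 1} : Set ℝ)
  eq_zero : ∀ a ∉ Etilde, x a = 0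
  conservation : ∀ v, ssum (dplus {v}) x = ssum (dminus {v}) x

theorem IsRoute.nonneg (hx : IsRoute x) : 0 ≤ x :=
  fun a => nonneg_of_mem_zero_one (hx.mem_zero_one a)

theorem IsRoute.support_subset (hx : IsRoute x) : Function.support x ⊆ Etilde :=
  fun a ha => by_contra fun h => ha (hx.eq_zero a h)

theorem IsRoute.apply_eq_indicator (hx : IsRoute x) (a : WV n q m × WV n q m) :
    x a = (Function.support x).indicator 1 a := by
  by_cases ha : x a = 0
  · rw [Set.indicator_of_notMem (by simpa using ha), ha]
  · rw [Set.indicator_of_mem ha, eq_one_of_mem_zero_one (hx.mem_zero_one a) ha, Pi.one_apply]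

theorem IsRoute.netOutflow_eq_zero (hx : IsRoute x) : netOutflow x = 0 := by
  ext v
  rw [← ssum_dplus_sub_ssum_dminus hx.eq_zero, hx.conservation, sub_self, Pi.zero_apply]

theorem IsRoute.reach_symm (hx : IsRoute x) (h : Reach (Function.support x) u v) :
    Reach (Function.support x) v u :=
  h.symm_of_circulation hx.nonneg hx.netOutflow_eq_zero

theorem IsRoute.one_le_ssum {E : Set (WV n q m × WV n q m)} (hx : IsRoute x) (haE : a ∈ E)
    (ha : a ∈ Function.support x) : 1 ≤ ssum E x :=
  (eq_one_of_mem_zero_one (hx.mem_zero_one a) ha).ge.trans (le_ssum_of_mem hx.nonneg haE)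

theorem IsRoute.one_le_ssum_dplus_of_reach (hx : IsRoute x) (h : Reach (Function.support x) u v)
    (hu : u ∈ S) (hv : v ∉ S) : 1 ≤ ssum (dplus S) x := by
  obtain ⟨a, ha, hfst, hsnd, -⟩ := h.exists_arc_leaving hu hv
  exact hx.one_le_ssum ⟨hx.support_subset ha, hfst, hsnd⟩ ha

/-- The part of the arc variables `x` in the connected component of `s0`. -/
noncomputable def originPart (s0 : WV n q m) (x : WV n q m × WV n q m → ℝ) :
    WV n q m × WV n q m → ℝ :=
  {a | Reach (Function.support x) s0 a.1}.indicator x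

theorem originPart_apply_of_reach (h : Reach (Function.support x) s0 a.1) :
    originPart s0 x a = x a :=
  Set.indicator_of_mem (s := {a : WV n q m × WV n q m | Reach (Function.support x) s0 a.1}) h x

theorem reach_of_mem_support_originPart (ha : a ∈ Function.support (originPart s0 x)) :
    Reach (Function.support x) s0 a.1 :=
  (Set.indicator_apply_ne_zero.1 ha).1

theorem originPart_le (hx : IsRoute x) : originPart s0 x ≤ x :=
  Set.indicator_le_self' fun a _ => hx.nonneg a

theorem ssum_dplus_originPart (h : Reach (Function.support x) s0 v) :
    ssum (dplus {v}) (originPart s0 x) = ssum (dplus {v}) x :=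
  ssum_congr fun a ha => originPart_apply_of_reach (by rwa [show a.1 = v from ha.2.1])

theorem originPart_eq_zero (ha : x a = 0) : originPart s0 x a = 0 :=
  Set.indicator_apply_eq_zero.2 fun _ => ha

theorem netOutflow_originPart (hx : IsRoute x) : netOutflow (originPart s0 x) = 0 := by
  have hcomponent : ∀ a ∈ Function.support x, a.1 ∈ {v | Reach (Function.support x) s0 v} ↔
      a.2 ∈ {v | Reach (Function.support x) s0 v} := fun a ha =>
    ⟨fun h => h.tail ha, fun h => h.trans (hx.reach_symm (.single ha))⟩
  refine (netOutflow_indicator_fst_mem hcomponent).trans ?_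
  rw [hx.netOutflow_eq_zero, Set.indicator_zero']

theorem isRoute_originPart (hx : IsRoute x) : IsRoute (originPart s0 x) where
  mem_zero_one a := by
    obtain h | h := Set.indicator_eq_zero_or_self {a | Reach (Function.support x) s0 a.1} x a
    · exact .inl h
    · exact (congrArg (· ∈ ({0, 1} : Set ℝ)) h).mpr (hx.mem_zero_one a)
  eq_zero a ha := originPart_eq_zero (hx.eq_zero a ha)
  conservation v := by
    rw [← sub_eq_zero, ssum_dplus_sub_ssum_dminus fun a ha => originPart_eq_zero (hx.eq_zero a ha),
      netOutflow_originPart hx, Pi.zero_apply]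

theorem reach_originPart (h : Reach (Function.support x) s0 v) :
    Reach (Function.support (originPart s0 x)) s0 v := by
  induction h with
  | refl => exact .refl
  | tail hu huv ih => exact ih.tail (by rwa [Function.mem_support, originPart_apply_of_reach hu])

end Routes

section Plans

variable {T} {L : O → Set (WV n q m)} {b : O → ℝ} {B : ℝ} {s0 u v : WV n q m}
  {x : Fin T → WV n q m × WV n q m → ℝ} {y : Fin T → WV n q m → ℝ} {z : O → Fin T → ℝ}
  {α β : Fin T → WV n q m → ℝ} {γ : Fin T → WV n q m × WV n q m → ℝ}
  {σ : Fin T → WV n q m → WV n q m × WV n q m → ℝ} {t : Fin T}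
  {A : Set (WV n q m × WV n q m)} {i : Fin n} {j : Fin q} {k : Fin (m i j + 1)}

theorem obj_le_obj {d : WV n q m → WV n q m → ℝ} {x' : Fin T → WV n q m × WV n q m → ℝ}
    (hd : ∀ a ∈ Etilde, 0 ≤ d a.1 a.2) (hxx' : x ≤ x') : obj T d x ≤ obj T d x' :=
  Finset.sum_le_sum fun t _ => ssum_mono fun a ha => mul_le_mul_of_nonneg_left (hxx' t a) (hd a ha)

/-- An assignment `z` of the orders to the pickers with connected routes `x` through the origin
`s0` that visit all locations to be picked: the common content of `P_basic` and `P_F`. -/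
structure IsConnectedPlan (s0 : WV n q m) (L : O → Set (WV n q m)) (b : O → ℝ) (B : ℝ)
    (x : Fin T → WV n q m × WV n q m → ℝ) (z : O → Fin T → ℝ) : Prop where
  isRoute : ∀ t, IsRoute (x t)
  reach : ∀ t, ∀ a ∈ Function.support (x t), Reach (Function.support (x t)) s0 a.1
  mem_zero_one : ∀ o t, z o t ∈ ({0, 1} : Set ℝ)
  leaves_origin : ∀ t, 1 ≤ ssum (dplus {s0}) (x t)
  leaves_picked : ∀ t o, ∀ u ∈ L o, z o t ≤ ssum (dplus {u}) (x t)
  assigned : ∀ o, ∑ t, z o t = 1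
  capacity : ∀ t, ∑ o, b o * z o t ≤ B

theorem IsConnectedPlan.pbasic (h : IsConnectedPlan s0 L b B x z) :
    Pbasic T {0, 1} s0 L b B x
      (fun t => {v | Reach (Function.support (x t)) s0 v}.indicator 1) z := by
  refine ⟨fun t => (h.isRoute t).mem_zero_one, fun t => indicator_one_mem_zero_one _,
    h.mem_zero_one, fun t => (h.isRoute t).eq_zero, h.leaves_origin, h.leaves_picked, ?_, ?_,
    fun t => (h.isRoute t).conservation, h.assigned, h.capacity⟩
  · intro t u v _ _
    rw [(h.isRoute t).apply_eq_indicator]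
    exact indicator_one_le_indicator_one (h.reach t _)
  · intro t S hs0 _ u hu
    refine Set.indicator_apply_le' (fun hreach => ?_) fun _ => ssum_nonneg (h.isRoute t).nonneg
    exact (h.isRoute t).one_le_ssum_dplus_of_reach ((h.isRoute t).reach_symm hreach) hu hs0

theorem Pbasic.isConnectedPlan (h : Pbasic T {0, 1} s0 L b B x y z) :
    IsConnectedPlan s0 L b B x z := by
  obtain ⟨hx, -, hz, hx0, horigin, hpick, hxy, hcut, hcons, hassign, hcap⟩ := h
  have hroute (t : Fin T) : IsRoute (x t) := ⟨hx t, hx0 t, hcons t⟩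
  refine ⟨hroute, fun t a ha => (hroute t).reach_symm ?_, hz, horigin, hpick, hassign, hcap⟩
  by_contra hs0
  let S : Set (WV n q m) := {v | Reach (Function.support (x t)) a.1 v}
  have haE : a ∈ Etilde := (hroute t).support_subset ha
  have hcard : 2 ≤ S.ncard := (Set.one_lt_ncard (Set.toFinite S)).2
    ⟨a.1, .refl, a.2, .single ha, fst_ne_snd_of_mem_Etilde haE⟩
  have hy1 : 1 ≤ y t a.1 := by
    have hne : a.1 ≠ s0 := fun h => hs0 (h ▸ .refl)
    exact (eq_one_of_mem_zero_one (hx t a) ha).ge.trans (hxy t a.1 a.2 hne haE)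
  have hout : ssum (dplus S) (x t) ≠ 0 :=
    (zero_lt_one.trans_le (hy1.trans (hcut t S hs0 hcard a.1 .refl))).ne'
  obtain ⟨e, ⟨-, hfst, hsnd⟩, he⟩ := exists_mem_support_of_ssum_ne_zero hout
  exact hsnd (Relation.ReflTransGen.tail hfst he)

theorem Psub.descendsTo {O : Type*} {L : O → Set (WV n q m)} {z : O → Fin T → ℝ}
    (h : Psub T {0, 1} L x z α β) (hk : α t (pk i j k) ≠ 0) :
    DescendsTo (Function.support (x t)) i j (k + 1) := by
  obtain ⟨hα, -, hsouth, hin, -⟩ := h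
  have hanti : Antitone fun k => α t (pk i j k) := Fin.antitone_iff_succ_le.2 fun k => by
    have hk := hsouth t i j k.castSucc k.isLt.ne
    rwa [sb_eq_loc, show ((k.castSucc : ℕ) + 2) = (k.succ : ℕ) + 1 from rfl, loc_val_succ] at hk
  intro r hr
  let k' : Fin (m i j + 1) := ⟨r, hr.trans_le k.isLt⟩
  have hle : α t (pk i j k) ≤ x t (loc i j r, loc i j (r + 1)) := by
    rw [← nb_eq_loc k', loc_val_succ k']
    exact (hanti (show k' ≤ k from Nat.lt_succ_iff.1 hr)).trans (hin t i j k')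
  exact (((nonneg_of_mem_zero_one (hα t _)).lt_of_ne' hk).trans_le hle).ne'

theorem Psub.ascendsTo {O : Type*} {L : O → Set (WV n q m)} {z : O → Fin T → ℝ}
    (h : Psub T {0, 1} L x z α β) (hk : β t (pk i j k) ≠ 0) :
    AscendsTo (Function.support (x t)) i j (k + 1) := by
  obtain ⟨-, hβ, -, -, hnorth, hin, -⟩ := h
  have hmono : Monotone fun k => β t (pk i j k) := Fin.monotone_iff_le_succ.2 fun k => by
    have hk := hnorth t i j k.succ (Nat.succ_ne_zero k)
    rwa [nb_eq_loc, show (k.succ : ℕ) = (k.castSucc : ℕ) + 1 from rfl, loc_val_succ] at hk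
  intro r hkr hr
  obtain ⟨r, rfl⟩ : ∃ r', r = r' + 1 := Nat.exists_eq_add_one.2 (Nat.zero_lt_of_lt hkr)
  let k' : Fin (m i j + 1) := ⟨r, Nat.lt_of_succ_lt_succ hr⟩
  have hle : β t (pk i j k) ≤ x t (loc i j (r + 1 + 1), loc i j (r + 1)) := by
    rw [← sb_eq_loc k', loc_val_succ k']
    exact (hmono (show k ≤ k' from Nat.le_of_succ_le_succ hkr)).trans (hin t i j k')
  exact (((nonneg_of_mem_zero_one (hβ t _)).lt_of_ne' hk).trans_le hle).ne'

theorem mem_VI_of_mem_Ered {a : WV n q m × WV n q m} (ha : a ∈ Ered) :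
    a.1 ∈ VI ∧ a.2 ∈ VI := by
  rcases ha with ⟨i, j, rfl | rfl⟩ | ⟨i, i', j, -, rfl | rfl⟩ <;>
    exact ⟨Set.mem_range_self _, Set.mem_range_self _⟩

theorem netOutflow_eq_zero_of_notMem_VI {g : WV n q m × WV n q m → ℝ} (hg : ∀ a ∉ Ered, g a = 0)
    (hv : v ∉ VI) : netOutflow g v = 0 := by
  have hout (w : WV n q m) : g (v, w) = 0 := hg _ fun h => hv (mem_VI_of_mem_Ered h).1
  have hin (w : WV n q m) : g (w, v) = 0 := hg _ fun h => hv (mem_VI_of_mem_Ered h).2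
  simp [netOutflow, hout, hin]

theorem Pf.isRoute (h : Pf T {0, 1} s0 L b B x y z α β γ σ) (t : Fin T) : IsRoute (x t) := by
  obtain ⟨hx, -, -, -, hx0, -, -, -, -, -, -, -, -, -, hcons, -⟩ := h
  exact ⟨hx t, hx0 t, hcons t⟩

theorem Pf.support_subset_reducedArcs (h : Pf T {0, 1} s0 L b B x y z α β γ σ)
    (hsub : Psub T {0, 1} L x z α β) :
    Function.support (γ t) ⊆ reducedArcs (Function.support (x t)) := by
  obtain ⟨-, -, -, hγ, -, hγ0, -, -, -, hcross, hα, hxl, hβ, hxf, -⟩ := h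
  intro a ha
  have hpos {r : ℝ} (hr : γ t a ≤ r) : r ≠ 0 :=
    (((nonneg_of_mem_zero_one (hγ t a)).lt_of_ne' ha).trans_le hr).ne'
  have haE : a ∈ Ered := by_contra fun h => ha (hγ0 t a h)
  rcases haE with ⟨i, j, rfl | rfl⟩ | haC
  · refine descend_mem_reducedArcs.2 ((hsub.descendsTo (hpos (hα t i j))).succ ?_)
    have hlast := hpos (hxl t i j)
    rwa [← loc_val_succ, ← loc_last] at hlast
  · refine ascend_mem_reducedArcs.2 ((hsub.ascendsTo (hpos (hβ t i j))).of_succ ?_)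
    have hfirst := hpos (hxf t i j)
    rwa [← loc_val_succ, ← loc_zero] at hfirst
  · refine (mem_reducedArcs_of_mem_crossArcs haC).2 ?_
    rwa [Function.mem_support, hcross t a haC]

theorem Pf.reach_origin (h : Pf T {0, 1} s0 L b B x y z α β γ σ) (hsub : Psub T {0, 1} L x z α β)
    (hu : u ∈ VI) (huv : (u, v) ∈ Function.support (x t)) :
    Reach (Function.support (x t)) u s0 := by
  have hγ := h.support_subset_reducedArcs hsub (t := t)
  obtain ⟨hx, -, -, -, hx0, -, -, -, hxy, -, -, -, -, -, -, -, -, hsource, hcons, -, hbound, hσ0, -⟩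
    := h
  by_cases hus : u = s0
  · exact hus ▸ .refl
  have hy : 0 < y t u := by
    refine ((nonneg_of_mem_zero_one (hx t (u, v))).lt_of_ne' huv).trans_le (hxy t u v hu hus ?_)
    exact by_contra fun h => huv (hx0 t _ h)
  have hσ : 0 ≤ σ t u := fun a => by
    by_cases ha : a ∈ Ered
    · exact (hbound t u a hu ha).1
    · exact (hσ0 t u a ha).ge
  have hflow : Reach (Function.support (σ t u)) u s0 := by
    refine reach_of_netOutflow_pos hσ ?_ fun w hwu hws => ?_
    · rwa [← ssum_etaplus_sub_ssum_etaminus (hσ0 t u), hsource t u hu]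
    · by_cases hw : w ∈ VI
      · rw [← ssum_etaplus_sub_ssum_etaminus (hσ0 t u), hcons t u w hu hw hws hwu]
      · exact netOutflow_eq_zero_of_notMem_VI (hσ0 t u) hw
  refine Reach.of_reducedArcs (Relation.ReflTransGen.mono (fun v w hvw => ?_) u s0 hflow)
  refine hγ fun h => hvw ?_
  have haE : (v, w) ∈ Ered := by_contra fun h => hvw (hσ0 t u _ h)
  exact ((hbound t u _ hu haE).2.trans_eq h).antisymm (hσ _)

theorem Pf.reach_picked (h : Pf T {0, 1} s0 L b B x y z α β γ σ) (hsub : Psub T {0, 1} L x z α β)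
    (hL : ∀ o, L o ⊆ VL) {o : O} (hz : z o t ≠ 0) (hu : u ∈ L o) :
    Reach (Function.support (x t)) s0 u := by
  have ⟨_, _, hz01, _⟩ := h
  have ⟨_, _, _, _, _, _, hαβ⟩ := hsub
  have hcover : 0 < α t u + β t u :=
    ((nonneg_of_mem_zero_one (hz01 o t)).lt_of_ne' hz).trans_le (hαβ t o u hu)
  obtain ⟨⟨i, j, k⟩, rfl⟩ := hL o hu
  change Reach (Function.support (x t)) s0 (pk i j k)
  by_cases hα : α t (pk i j k) = 0
  · have hasc := hsub.ascendsTo fun hβ : β t (pk i j k) = 0 =>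
      hcover.ne' ((congrArg₂ (· + ·) hα hβ).trans (add_zero 0))
    have hfirst := hasc (m i j + 1) k.isLt (Nat.lt_succ_self _)
    rw [loc_last] at hfirst
    have hend := h.reach_origin hsub ⟨_, rfl⟩ hfirst
    rw [← loc_val_succ]
    exact ((h.isRoute t).reach_symm hend).trans (hasc.reach (Nat.succ_le_succ k.isLt.le))
  · have hdesc := hsub.descendsTo hα
    have hend := h.reach_origin hsub ⟨_, rfl⟩ (hdesc 0 k.succ_pos)
    rw [← loc_val_succ]
    exact ((h.isRoute t).reach_symm hend).trans hdesc.reach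

theorem Pf.isConnectedPlan_originPart (h : Pf T {0, 1} s0 L b B x y z α β γ σ)
    (hsub : Psub T {0, 1} L x z α β) (hL : ∀ o, L o ⊆ VL) :
    IsConnectedPlan s0 L b B (fun t => originPart s0 (x t)) z := by
  have ⟨_, _, hz, _, _, _, horigin, hpick, _, _, _, _, _, _, _, hassign, hcap, _⟩ := h
  refine ⟨fun t => isRoute_originPart (h.isRoute t), fun t a ha => ?_, hz, fun t => ?_,
    fun t o u hu => ?_, hassign, hcap⟩
  · exact reach_originPart (reach_of_mem_support_originPart ha)
  · exact (horigin t).trans_eq (ssum_dplus_originPart .refl).symm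
  · by_cases hzo : z o t = 0
    · exact hzo.trans_le (ssum_nonneg (isRoute_originPart (h.isRoute t)).nonneg)
    · exact (hpick t o u hu).trans_eq
        (ssum_dplus_originPart (h.reach_picked hsub hL hzo hu)).symm

/-- The picking locations reached straight from the north, the intended value of `α`. -/
def descentLocations (A : Set (WV n q m × WV n q m)) : Set (WV n q m) :=
  {v | ∃ i j k, v = pk i j k ∧ DescendsTo A i j (k + 1)}

/-- The picking locations reached straight from the south, the intended value of `β`. -/
def ascentLocations (A : Set (WV n q m × WV n q m)) : Set (WV n q m) :=
  {v | ∃ i j k, v = pk i j k ∧ AscendsTo A i j (k + 1)}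

/-- The artificial locations other than the origin that are left along an arc of `A`, the intended
value of `y` in `P_F`. -/
def visitedArtificial (s0 : WV n q m) (A : Set (WV n q m × WV n q m)) : Set (WV n q m) :=
  {v | v ∈ VI ∧ v ≠ s0 ∧ ∃ w, (v, w) ∈ A}

theorem pk_mem_descentLocations : pk i j k ∈ descentLocations A ↔ DescendsTo A i j (k + 1) := by
  refine ⟨?_, fun h => ⟨i, j, k, rfl, h⟩⟩
  rintro ⟨_, _, _, hk, h⟩
  cases hk
  exact h

theorem pk_mem_ascentLocations : pk i j k ∈ ascentLocations A ↔ AscendsTo A i j (k + 1) := by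
  refine ⟨?_, fun h => ⟨i, j, k, rfl, h⟩⟩
  rintro ⟨_, _, _, hk, h⟩
  cases hk
  exact h

theorem StraightReach.pk_mem (h : StraightReach A u (pk i j k)) :
    pk i j k ∈ descentLocations A ∪ ascentLocations A :=
  h.imp (fun h => pk_mem_descentLocations.2 h.2) fun h => pk_mem_ascentLocations.2 h.2

theorem IsConnectedPlan.picked_mem (h : IsConnectedPlan s0 L b B x z) (hs0 : s0 ∈ VI)
    (hL : ∀ o, L o ⊆ VL) {o : O} (hz : z o t ≠ 0) (hu : u ∈ L o) :
    u ∈ descentLocations (Function.support (x t)) ∪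
      ascentLocations (Function.support (x t)) := by
  have hz0 : 0 < z o t := (nonneg_of_mem_zero_one (h.mem_zero_one o t)).lt_of_ne' hz
  obtain ⟨a, ⟨-, rfl, -⟩, ha⟩ :=
    exists_mem_support_of_ssum_ne_zero (hz0.trans_le (h.leaves_picked t o u hu)).ne'
  have hstraight := (h.reach t a ha).straightReach (h.isRoute t).support_subset hs0
  obtain ⟨⟨i, j, k⟩, hk⟩ := hL o hu
  rw [← hk] at hstraight ⊢
  exact StraightReach.pk_mem hstraight

theorem IsConnectedPlan.psub (h : IsConnectedPlan s0 L b B x z) (hs0 : s0 ∈ VI)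
    (hL : ∀ o, L o ⊆ VL) :
    Psub T {0, 1} L x z
      (fun t => (descentLocations (Function.support (x t))).indicator 1)
      (fun t => (ascentLocations (Function.support (x t))).indicator 1) := by
  refine ⟨fun t => indicator_one_mem_zero_one _, fun t => indicator_one_mem_zero_one _,
    fun t i j k hk => indicator_one_le_indicator_one fun hs => ?_, fun t i j k => ?_,
    fun t i j k hk => indicator_one_le_indicator_one fun hn => ?_, fun t i j k => ?_,
    fun t o u hu => ?_⟩
  · have hk' : (k : ℕ) + 1 < m i j + 1 := by omega
    rw [(sb_eq_loc k).trans (loc_val_succ ⟨k + 1, hk'⟩), pk_mem_descentLocations] at hs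
    exact pk_mem_descentLocations.2 (hs.mono (Nat.le_succ _))
  · rw [(h.isRoute t).apply_eq_indicator, nb_eq_loc]
    refine indicator_one_le_indicator_one fun hv => ?_
    rw [← loc_val_succ]
    exact pk_mem_descentLocations.1 hv k (Nat.lt_succ_self _)
  · obtain ⟨_ | k, hk'⟩ := k
    · exact absurd rfl hk
    · rw [(nb_eq_loc _).trans (loc_val_succ ⟨k, Nat.lt_of_succ_lt hk'⟩),
        pk_mem_ascentLocations] at hn
      exact pk_mem_ascentLocations.2 (hn.mono (Nat.le_succ _))
  · rw [(h.isRoute t).apply_eq_indicator, sb_eq_loc]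
    refine indicator_one_le_indicator_one fun hv => ?_
    rw [← loc_val_succ]
    exact pk_mem_ascentLocations.1 hv (k + 1) le_rfl (Nat.succ_lt_succ k.isLt)
  · have hα := indicator_one_mem_zero_one (descentLocations (Function.support (x t))) u
    have hβ := indicator_one_mem_zero_one (ascentLocations (Function.support (x t))) u
    by_cases hz : z o t = 0
    · rw [hz]
      exact add_nonneg (nonneg_of_mem_zero_one hα) (nonneg_of_mem_zero_one hβ)
    · rw [eq_one_of_mem_zero_one (h.mem_zero_one o t) hz]
      rcases h.picked_mem hs0 hL hz hu with hu | hu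
      · exact (Set.indicator_of_mem hu 1).ge.trans
          (le_add_of_nonneg_right (nonneg_of_mem_zero_one hβ))
      · exact (Set.indicator_of_mem hu 1).ge.trans
          (le_add_of_nonneg_left (nonneg_of_mem_zero_one hα))

theorem IsConnectedPlan.exists_commodity (h : IsConnectedPlan s0 L b B x z) (hs0 : s0 ∈ VI)
    (t : Fin T) (v0 : WV n q m) :
    ∃ σ : WV n q m × WV n q m → ℝ, 0 ≤ σ ∧
      σ ≤ (reducedArcs (Function.support (x t))).indicator 1 ∧ (v0 ∉ VI → σ = 0) ∧
      netOutflow σ v0 = (visitedArtificial s0 (Function.support (x t))).indicator 1 v0 ∧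
      (∀ u, u ≠ s0 → u ≠ v0 → netOutflow σ u = 0) ∧
      netOutflow σ s0 = -(visitedArtificial s0 (Function.support (x t))).indicator 1 v0 := by
  by_cases hv0 : v0 ∈ visitedArtificial s0 (Function.support (x t))
  · have ⟨hv0I, hne, w, hv0w⟩ := hv0
    have hreach := ((h.isRoute t).reach_symm (h.reach t _ hv0w)).to_reducedArcs
      (h.isRoute t).support_subset hv0I hs0
    obtain ⟨P, hP, hnet⟩ := hreach.exists_netOutflow_indicator (K := ℝ)
    refine ⟨P.indicator 1, Set.indicator_nonneg fun _ _ => zero_le_one,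
      fun _ => indicator_one_le_indicator_one (hP ·), fun h => absurd hv0I h, ?_⟩
    simp +contextual [hnet, hv0, hne, hne.symm]
  · refine ⟨0, le_rfl, Set.indicator_nonneg fun _ _ => zero_le_one, fun _ => rfl, ?_⟩
    simp [netOutflow_zero, hv0]

theorem IsConnectedPlan.exists_pf (h : IsConnectedPlan s0 L b B x z) (hs0 : s0 ∈ VI) :
    ∃ σ, Pf T {0, 1} s0 L b B x
      (fun t => (visitedArtificial s0 (Function.support (x t))).indicator 1) z
      (fun t => (descentLocations (Function.support (x t))).indicator 1)
      (fun t => (ascentLocations (Function.support (x t))).indicator 1)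
      (fun t => (reducedArcs (Function.support (x t))).indicator 1) σ := by
  choose σ hσ hσγ hσart hsource hcons hsink using h.exists_commodity hs0
  have hγ0 (t : Fin T) (a : WV n q m × WV n q m) (ha : a ∉ Ered) :
      (reducedArcs (Function.support (x t))).indicator (1 : WV n q m × WV n q m → ℝ) a = 0 :=
    Set.indicator_of_notMem (fun h => ha (reducedArcs_subset_Ered h)) _
  have hσ0 (t : Fin T) (v0 : WV n q m) (a : WV n q m × WV n q m) (ha : a ∉ Ered) : σ t v0 a = 0 :=
    ((hσγ t v0 a).trans_eq (hγ0 t a ha)).antisymm (hσ t v0 a)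
  refine ⟨σ, fun t => (h.isRoute t).mem_zero_one, fun t => indicator_one_mem_zero_one _,
    h.mem_zero_one, fun t => indicator_one_mem_zero_one _, fun t => (h.isRoute t).eq_zero, hγ0,
    h.leaves_origin, h.leaves_picked, fun t u v hu hus _ => ?_, fun t a ha => ?_,
    fun t i j => ?_, fun t i j => ?_, fun t i j => ?_, fun t i j => ?_,
    fun t => (h.isRoute t).conservation, h.assigned, h.capacity,
    fun t v0 _ => ?_, fun t v0 u _ _ hus huv => ?_, fun t v0 _ => ?_,
    fun t v0 a _ _ => ⟨hσ t v0 a, hσγ t v0 a⟩, hσ0, fun t v0 a hv0 => congrFun (hσart t v0 hv0) a⟩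
  · rw [(h.isRoute t).apply_eq_indicator]
    exact indicator_one_le_indicator_one fun huv => ⟨hu, hus, v, huv⟩
  · rw [(h.isRoute t).apply_eq_indicator]
    exact le_antisymm
      (indicator_one_le_indicator_one (mem_reducedArcs_of_mem_crossArcs ha).2)
      (indicator_one_le_indicator_one (mem_reducedArcs_of_mem_crossArcs ha).1)
  · refine indicator_one_le_indicator_one fun ha => pk_mem_descentLocations.2 ?_
    exact (descend_mem_reducedArcs.1 ha).mono (Nat.le_succ _)
  · rw [(h.isRoute t).apply_eq_indicator, ← loc_val_succ]
    refine indicator_one_le_indicator_one fun ha => ?_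
    rw [← loc_last]
    exact descend_mem_reducedArcs.1 ha (m i j + 1) (Nat.lt_succ_self _)
  · refine indicator_one_le_indicator_one fun ha => pk_mem_ascentLocations.2 ?_
    exact (ascend_mem_reducedArcs.1 ha).mono (Nat.zero_le _)
  · rw [(h.isRoute t).apply_eq_indicator, ← loc_val_succ]
    exact indicator_one_le_indicator_one fun ha =>
      ascend_mem_reducedArcs.1 ha 0 le_rfl (Nat.succ_pos _)
  · rw [ssum_etaplus_sub_ssum_etaminus (hσ0 t v0), hsource]
  · rw [ssum_etaplus_sub_ssum_etaminus (hσ0 t v0), hcons t v0 u hus huv]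
  · rw [ssum_etaplus_sub_ssum_etaminus (hσ0 t v0), hsink]

end Plans

theorem PF_eq_Pbasic_general (L : O → Set (WV n q m)) (hL : ∀ o, L o ⊆ VL) (b : O → ℝ) (B : ℝ)
    (s0 : WV n q m) (hs0 : s0 ∈ VI) (d : WV n q m → WV n q m → ℝ)
    (hd : ∀ a ∈ Etilde (m := m), 0 ≤ d a.1 a.2) :
    sInf { r : ℝ | ∃ x y z α β γ σ,
        Pf T ({0, 1} : Set ℝ) s0 L b B x y z α β γ σ ∧
        Psub T ({0, 1} : Set ℝ) L x z α β ∧ r = obj T d x } =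
    sInf { r : ℝ | ∃ x y z,
        Pbasic T ({0, 1} : Set ℝ) s0 L b B x y z ∧ r = obj T d x } := by
  refine csInf_eq_csInf_of_forall_exists_le ?_ ?_
  · rintro _ ⟨x, y, z, α, β, γ, σ, hf, hsub, rfl⟩
    have hplan := hf.isConnectedPlan_originPart hsub hL
    exact ⟨_, ⟨_, _, z, hplan.pbasic, rfl⟩, obj_le_obj hd fun t => originPart_le (hf.isRoute t)⟩
  · rintro _ ⟨x, y, z, hbasic, rfl⟩
    have hplan := hbasic.isConnectedPlan
    obtain ⟨σ, hf⟩ := hplan.exists_pf hs0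
    exact ⟨_, ⟨x, _, z, _, _, _, σ, hf, hplan.psub hs0 hL, rfl⟩, le_rfl⟩

/-- Theorem 3 (first part): the compact multicommodity-flow formulation
`P_F = P_f ∩ P_sub` has the same optimal objective value as the basic
formulation `P_basic` of the joint order batching and picker routing problem:
`min { f(x) : (x,y,z,α,β,γ,σ) ∈ P_F } = min { f(x) : (x,y,z) ∈ P_basic }`.
The warehouse has `n + 1` picking aisles and `q + 1` blocks, the origin is the
top-left artificial location, `d` is the (symmetric, positive) arc length,
each order `o` has size `b o > 0` and set of picking locations `L o ⊆ V_L`,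
and each of the `T` pickers has capacity `B`. -/
theorem PF_eq_Pbasic
    {n q : ℕ} {m : Fin (n + 1) → Fin (q + 1) → ℕ}
    (T : ℕ) (O : Type) [Fintype O]
    (L : O → Set (WV (n + 1) (q + 1) m)) (hL : ∀ o, L o ⊆ VL)
    (b : O → ℝ) (hb : ∀ o, 0 < b o) (B : ℝ)
    (d : WV (n + 1) (q + 1) m → WV (n + 1) (q + 1) m → ℝ)
    (hdpos : ∀ a ∈ Etilde (m := m), 0 < d a.1 a.2)
    (hdsymm : ∀ u v, d u v = d v u) :
    sInf { r : ℝ | ∃ x y z α β γ σ,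
        Pf T ({0, 1} : Set ℝ) (art 0 0) L b B x y z α β γ σ ∧
        Psub T ({0, 1} : Set ℝ) L x z α β ∧ r = obj T d x } =
    sInf { r : ℝ | ∃ x y z,
        Pbasic T ({0, 1} : Set ℝ) (art 0 0) L b B x y z ∧ r = obj T d x } :=
  PF_eq_Pbasic_general T L hL b B (art 0 0) ⟨(0, 0), rfl⟩ d fun a ha => (hdpos a ha).le

end Formulations

end JOBPRP
end

section
/- In a single-block warehouse graph, for any required set V_R of picking vertices, every optimal tour (a tour visiting all vertices of V_R of minimum length among such tours) traverses each aisle at most once; that is, for each aisle i, the optimal tour contains at most one contiguous occurrence of the full subpath u_i v_{i1} … v_{i s_i} d_i or its reverse. -/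
namespace SingleBlock

/-- Vertices of a single-block warehouse with `n` aisles, where aisle `i`
contains `sz i + 1` picking vertices: `Sum.inl (Sum.inl i)` is the artificial
vertex `u i` on the top cross-aisle, `Sum.inl (Sum.inr i)` is the artificial
vertex `d i` on the bottom cross-aisle, and `Sum.inr ⟨i, k⟩` is the picking
vertex `v i k` (numbered from north to south). -/
abbrev SBV (n : ℕ) (sz : Fin n → ℕ) : Type :=
  (Fin n ⊕ Fin n) ⊕ ((i : Fin n) × Fin (sz i + 1))

variable {n : ℕ} {sz : Fin n → ℕ}

/-- the artificial vertex `u i` on the top cross-aisle -/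
def top (i : Fin n) : SBV n sz := Sum.inl (Sum.inl i)

/-- the artificial vertex `d i` on the bottom cross-aisle -/
def bot (i : Fin n) : SBV n sz := Sum.inl (Sum.inr i)

/-- the picking vertex `v i k` -/
def pk (i : Fin n) (k : Fin (sz i + 1)) : SBV n sz := Sum.inr ⟨i, k⟩

/-- `v` is a picking vertex -/
def IsPick (v : SBV n sz) : Prop := ∃ i k, v = pk i k

/-- the aisle path `u_i — v_{i1} — ⋯ — v_{i s_i} — d_i` of aisle `i`,
as a list of vertices from north to south -/
def aislePath (i : Fin n) : List (SBV n sz) :=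
  top i :: ((List.ofFn fun k : Fin (sz i + 1) => pk i k) ++ [bot i])

/-- `x` and `y` occur consecutively (in this order) in the list `l` -/
def adjIn {α : Type*} (l : List α) (x y : α) : Prop :=
  ∃ p : ℕ, l[p]? = some x ∧ l[p + 1]? = some y

/-- adjacency in the single-block warehouse graph: neighboring artificial
vertices along the two cross-aisles, and consecutive vertices along each aisle
path -/
def Adj (x y : SBV n sz) : Prop :=
  (∃ i j : Fin n, (j : ℕ) = (i : ℕ) + 1 ∧
    ((x = top i ∧ y = top j) ∨ (x = top j ∧ y = top i) ∨
     (x = bot i ∧ y = bot j) ∨ (x = bot j ∧ y = bot i))) ∨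
  (∃ i, adjIn (aislePath i) x y ∨ adjIn (aislePath i) y x)

/-- the length of a walk, written as a list of vertices: the sum of the lengths
of its edges, counted with multiplicity -/
noncomputable def pathLen {α : Type*} (len : α → α → ℝ) (r : List α) : ℝ :=
  ((r.zip r.tail).map fun p => len p.1 p.2).sum

/-- a tour: a closed walk starting and ending at `s` -/
def IsTourFrom (s : SBV n sz) (r : List (SBV n sz)) : Prop :=
  r.head? = some s ∧ r.getLast? = some s ∧ r.Chain' Adj

/-- the tour `r'` is better than the tour `r`: every picking vertex visited by
`r` is also visited by `r'`, and `r'` is strictly shorter than `r` -/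
def Better (len : SBV n sz → SBV n sz → ℝ) (r' r : List (SBV n sz)) : Prop :=
  (∀ v, IsPick v → v ∈ r → v ∈ r') ∧ pathLen len r' < pathLen len r

/-- number of contiguous occurrences of `seg` in `r` -/
def occCount {α : Type*} [DecidableEq α] (seg r : List α) : ℕ :=
  ((List.range r.length).filter fun p => seg.isPrefixOf (r.drop p)).length

/-!
Suppose that aisle `i` is traversed twice, and let `b` be the part of the tour between these two
traversals.

If both traversals go in the same direction, replace them by an out-and-back walk in the aisle that
reaches all picking vertices but omits the last edge, and follow `b` backwards.

If they go in opposite directions, then `b` is a closed walk at one end of the aisle. If `b` visits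
no picking vertex, the out-and-back walk replaces both traversals and `b`. Otherwise `b` runs along
one cross-aisle until it first enters an aisle `k`. Instead of traversing aisle `i` first, follow
the mirror image of that stretch on the other cross-aisle, pass through aisle `k` from its other end
up to the first picking vertex of `b`, and continue along `b`. The second traversal of aisle `i`
still collects its picking vertices and, as all aisles have the same length, this saves twice the
edge by which `b` enters aisle `k`.
-/

section Lists

variable {α : Type*}

theorem pair_infix_iff_adjIn {l : List α} {x y : α} : [x, y] <:+: l ↔ adjIn l x y := by
  rw [List.infix_iff_getElem?]
  constructor
  · rintro ⟨p, -, h⟩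
    exact ⟨p, by simpa using h 0 (by simp), by simpa [add_comm] using h 1 (by simp)⟩
  · rintro ⟨p, hx, hy⟩
    have hp := (List.getElem?_eq_some_iff.1 hy).1
    refine ⟨p, by grind, fun k hk => ?_⟩
    rw [List.length_cons, List.length_singleton] at hk
    interval_cases k
    · simpa using hx
    · simpa [add_comm] using hy

theorem not_adjIn_self_of_nodup {l : List α} (h : l.Nodup) (x : α) : ¬ adjIn l x x := by
  intro hx
  simpa using h.sublist (pair_infix_iff_adjIn.2 hx).sublist

theorem isChain_adjIn (l : List α) : l.IsChain (adjIn l) :=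
  List.isChain_iff_getElem.2 fun p _ => ⟨p, by simp, by simp⟩

variable [DecidableEq α]

theorem occCount_eq_card (seg r : List α) :
    occCount seg r = ((Finset.range r.length).filter fun p => seg <+: r.drop p).card := by
  simp only [← List.isPrefixOf_iff_prefix]
  rw [occCount, ← List.toFinset_range, ← List.toFinset_filter,
    List.toFinset_card_of_nodup (List.nodup_range.filter _)]

theorem sum_occCount_le_one {ι : Type*} [Fintype ι] {seg : ι → List α} {r : List α}
    (hinj : ∀ i j p, seg i <+: r.drop p → seg j <+: r.drop p → i = j)
    (hlt : ∀ i j p q, p < q → seg i <+: r.drop p → ¬ seg j <+: r.drop q) :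
    ∑ i, occCount (seg i) r ≤ 1 := by
  simp_rw [occCount_eq_card, ← Finset.card_sigma]
  refine Finset.card_le_one.2 ?_
  rintro ⟨i, p⟩ hp ⟨j, q⟩ hq
  simp only [Finset.mem_sigma, Finset.mem_univ, Finset.mem_filter, true_and] at hp hq
  rcases lt_trichotomy p q with h | rfl | h
  · exact absurd hq.2 (hlt i j p q h hp.2)
  · rw [hinj i j p hp.2 hq.2]
  · exact absurd hp.2 (hlt j i q p h hq.2)

end Lists

section Walks

open SimpleGraph

variable {V : Type*} {G : SimpleGraph V} {s t u v x y : V}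

theorem exists_walk_support_eq {l : List V} (hs : l.head? = some s) (ht : l.getLast? = some t)
    (hl : l.IsChain G.Adj) : ∃ w : G.Walk s t, w.support = l := by
  have hne : l ≠ [] := by rintro rfl; simp at hs
  rw [List.head?_eq_some_head hne, Option.some_inj] at hs
  rw [List.getLast?_eq_some_getLast hne, Option.some_inj] at ht
  exact ⟨(Walk.ofSupport l hne hl).copy hs ht, by simp⟩

theorem head?_eq_of_prefix_support {p : G.Walk u v} {l : List V} (h : p.support <+: l) :
    l.head? = some u := by
  obtain ⟨l', rfl⟩ := h
  rw [← p.cons_tail_support, List.cons_append, List.head?_cons]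

theorem start_eq_of_support_prefix_support {p : G.Walk u v} {w : G.Walk s t}
    (h : p.support <+: w.support) : u = s := by
  rw [← p.cons_tail_support, ← w.cons_tail_support, List.cons_prefix_cons] at h
  exact h.1

theorem exists_eq_append_of_support_prefix_support {p : G.Walk s v} {w : G.Walk s t}
    (h : p.support <+: w.support) : ∃ c : G.Walk v t, w = p.append c := by
  induction p with
  | nil => exact ⟨w, rfl⟩
  | cons hadj p ih =>
    cases w with
    | nil => simp at h
    | cons hadj' w =>
      have hp := (List.cons_prefix_cons.1 h).2
      obtain rfl := start_eq_of_support_prefix_support hp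
      obtain ⟨c, rfl⟩ := ih hp
      exact ⟨c, rfl⟩

theorem exists_eq_append_of_support_prefix_drop (w : G.Walk s t) (p : G.Walk u v) (m : ℕ)
    (h : p.support <+: w.support.drop m) :
    ∃ (a : G.Walk s u) (c : G.Walk v t), a.length = m ∧ w = a.append (p.append c) := by
  induction m generalizing s with
  | zero =>
    obtain rfl := start_eq_of_support_prefix_support h
    obtain ⟨c, rfl⟩ := exists_eq_append_of_support_prefix_support h
    exact ⟨.nil, c, rfl, rfl⟩
  | succ m ih =>
    cases w with
    | nil => simp at h
    | cons hadj w =>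
      obtain ⟨a, c, ha, rfl⟩ := ih w (by simpa using h)
      exact ⟨.cons hadj a, c, by simpa using ha, rfl⟩

theorem drop_support_append (p : G.Walk s t) (q : G.Walk t u) (k : ℕ) :
    (p.append q).support.drop (p.length + k) = q.support.drop k := by
  rw [Walk.support_append_eq_support_dropLast_append, List.drop_append, List.drop_eq_nil_of_le]
  · simp
  · simp

theorem exists_eq_append_of_disjoint_occurrences (w : G.Walk s t) (p : G.Walk u v) (q : G.Walk x y)
    (hx : x ∉ p.support.tail.dropLast) {m m' : ℕ} (hlt : m < m')
    (hp : p.support <+: w.support.drop m) (hq : q.support <+: w.support.drop m') :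
    ∃ (a : G.Walk s u) (b : G.Walk v x) (c : G.Walk y t),
      w = a.append (p.append (b.append (q.append c))) := by
  obtain ⟨a, c, rfl, rfl⟩ := exists_eq_append_of_support_prefix_drop w p m hp
  obtain ⟨k, rfl⟩ := Nat.exists_eq_add_of_lt hlt
  rw [add_assoc, drop_support_append] at hq
  obtain ⟨j, hj⟩ : ∃ j, k + 1 = p.length + j := by
    refine Nat.exists_eq_add_of_le (not_lt.1 fun hk => hx ?_)
    have hget : (p.append c).support[k + 1]? = some x := by
      rw [← List.head?_drop, head?_eq_of_prefix_support hq]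
    rw [← List.tail_dropLast]
    refine List.mem_of_getElem? (i := k) ?_
    rwa [List.getElem?_tail, ← List.getElem?_append_left (by simpa using hk),
      ← Walk.support_append_eq_support_dropLast_append]
  rw [hj, drop_support_append] at hq
  obtain ⟨b, c', -, rfl⟩ := exists_eq_append_of_support_prefix_drop c q j hq
  exact ⟨a, b, c', rfl⟩

variable (len : V → V → ℝ)

@[simp]
theorem pathLen_singleton (x : V) : pathLen len [x] = 0 := by
  simp [pathLen]

@[simp]
theorem pathLen_support_cons (h : G.Adj u v) (w : G.Walk v t) :
    pathLen len (w.cons h).support = len u v + pathLen len w.support := by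
  cases w <;> simp [pathLen]

@[simp]
theorem pathLen_support_append (p : G.Walk s t) (q : G.Walk t u) :
    pathLen len (p.append q).support = pathLen len p.support + pathLen len q.support := by
  induction p with
  | nil => simp
  | cons h p ih => simp [-Walk.support_cons, ih, add_assoc]

variable {len}

theorem pathLen_support_reverse (hsymm : ∀ x y, len x y = len y x) (w : G.Walk s t) :
    pathLen len w.reverse.support = pathLen len w.support := by
  induction w with
  | nil => rfl
  | cons h w ih =>
    simp [-Walk.support_cons, -Walk.support_reverse, ih, hsymm, add_comm]

theorem pathLen_support_nonneg (hpos : ∀ x y, G.Adj x y → 0 < len x y) (w : G.Walk s t) :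
    0 ≤ pathLen len w.support := by
  induction w with
  | nil => simp
  | cons h w ih =>
    rw [pathLen_support_cons]
    exact add_nonneg (hpos _ _ h).le ih

end Walks

section Warehouse

open SimpleGraph

theorem nodup_aislePath (i : Fin n) : (aislePath (sz := sz) i).Nodup := by
  have hpk : Function.Injective fun k => (Sum.inr ⟨i, k⟩ : SBV n sz) :=
    Sum.inr_injective.comp sigma_mk_injective
  simp [-List.ofFn_succ, aislePath, List.nodup_append, List.nodup_ofFn.2 hpk, top, bot, pk]

variable (n sz) in
/-- The single-block warehouse as a simple graph, so that walks between prescribed ends can be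
cut and spliced with the `SimpleGraph.Walk` operations. -/
def warehouse : SimpleGraph (SBV n sz) where
  Adj := Adj
  symm := ⟨fun x y => by
    rintro (⟨i, j, hij, h⟩ | ⟨i, h⟩)
    · exact Or.inl ⟨i, j, hij, by tauto⟩
    · exact Or.inr ⟨i, h.symm⟩⟩
  loopless := ⟨fun x => by
    rintro (⟨i, j, hij, h⟩ | ⟨i, h⟩)
    · have hne : i ≠ j := by rintro rfl; lia
      rcases h with ⟨rfl, h⟩ | ⟨rfl, h⟩ | ⟨rfl, h⟩ | ⟨rfl, h⟩ <;>
        simp [top, bot, hne, hne.symm] at h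
    · exact not_adjIn_self_of_nodup (nodup_aislePath i) x (or_self_iff.1 h)⟩

theorem isTourFrom_iff {s : SBV n sz} {r : List (SBV n sz)} :
    IsTourFrom s r ↔ ∃ w : (warehouse n sz).Walk s s, w.support = r := by
  constructor
  · rintro ⟨hhead, hlast, hchain⟩
    exact exists_walk_support_eq hhead hlast hchain
  · rintro ⟨w, rfl⟩
    exact ⟨by rw [List.head?_eq_some_head w.support_ne_nil, w.head_support],
      by rw [List.getLast?_eq_some_getLast w.support_ne_nil, w.getLast_support],
      w.isChain_adj_support⟩

/-- The artificial vertex of aisle `i` on the cross-aisle `σ`, where `true` stands for the top and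
`false` for the bottom cross-aisle; the Boolean lets `!σ` express the north-south symmetry. -/
def crossVertex (σ : Bool) (i : Fin n) : SBV n sz := cond σ (top i) (bot i)

theorem crossVertex_left_injective (i : Fin n) :
    Function.Injective fun σ => crossVertex (sz := sz) σ i := by
  rintro (_ | _) (_ | _) <;> simp [crossVertex, top, bot]

theorem not_isPick_crossVertex (σ : Bool) (i : Fin n) : ¬ IsPick (crossVertex (sz := sz) σ i) := by
  rintro ⟨j, k, h⟩
  cases σ <;> simp [crossVertex, top, bot, pk] at h

theorem exists_walk_support_eq_aislePath (i : Fin n) :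
    ∃ w : (warehouse n sz).Walk (top i) (bot i), w.support = aislePath i :=
  exists_walk_support_eq rfl (by rw [aislePath, ← List.cons_append, List.getLast?_concat])
    ((isChain_adjIn _).imp fun _ _ h => Or.inr ⟨i, Or.inl h⟩)

/-- The traversal of aisle `i` that starts at its end `crossVertex σ i`. -/
noncomputable def aisleWalk : ∀ (σ : Bool) (i : Fin n),
    (warehouse n sz).Walk (crossVertex σ i) (crossVertex (!σ) i)
  | true, i => (exists_walk_support_eq_aislePath i).choose
  | false, i => (exists_walk_support_eq_aislePath i).choose.reverse

theorem support_aisleWalk_true (i : Fin n) :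
    (aisleWalk (sz := sz) true i).support = aislePath i :=
  (exists_walk_support_eq_aislePath i).choose_spec

theorem aisleWalk_false (i : Fin n) : aisleWalk (sz := sz) false i = (aisleWalk true i).reverse :=
  rfl

theorem support_aisleWalk_false (i : Fin n) :
    (aisleWalk (sz := sz) false i).support = (aislePath i).reverse := by
  rw [aisleWalk_false, Walk.support_reverse, support_aisleWalk_true]

theorem mem_support_aisleWalk {σ : Bool} {i : Fin n} {v : SBV n sz} :
    v ∈ (aisleWalk σ i).support ↔ v ∈ aislePath i := by
  cases σ
  · rw [support_aisleWalk_false, List.mem_reverse]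
  · rw [support_aisleWalk_true]

theorem isPath_aisleWalk (σ : Bool) (i : Fin n) : (aisleWalk (sz := sz) σ i).IsPath := by
  refine .mk' ?_
  cases σ
  · rw [support_aisleWalk_false]
    exact List.nodup_reverse.2 (nodup_aislePath i)
  · rw [support_aisleWalk_true]
    exact nodup_aislePath i

theorem not_nil_aisleWalk (σ : Bool) (i : Fin n) : ¬ (aisleWalk (sz := sz) σ i).Nil :=
  Walk.not_nil_of_ne (by cases σ <;> simp [crossVertex, top, bot])

theorem isPick_of_mem_interior_aisleWalk {σ : Bool} {i : Fin n} {v : SBV n sz}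
    (hv : v ∈ (aisleWalk σ i).support.tail.dropLast) : IsPick v := by
  have hv' : v ∈ List.ofFn (pk (sz := sz) i) := by
    cases σ
    · simpa [-List.ofFn_succ, support_aisleWalk_false, aislePath] using hv
    · simpa [-List.ofFn_succ, support_aisleWalk_true, aislePath] using hv
  obtain ⟨k, rfl⟩ := (List.mem_ofFn' _ _).1 hv'
  exact ⟨i, k, rfl⟩

theorem crossVertex_mem_aislePath {σ : Bool} {i j : Fin n} :
    crossVertex (sz := sz) σ i ∈ aislePath j ↔ i = j := by
  cases σ <;> simp [crossVertex, aislePath, top, bot, pk]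

theorem adj_crossVertex_crossVertex (σ : Bool) {i j : Fin n} (h : (pathGraph n).Adj i j) :
    (warehouse n sz).Adj (crossVertex σ i) (crossVertex σ j) := by
  left
  rcases pathGraph_adj.1 h with h | h
  · exact ⟨i, j, h.symm, by cases σ <;> simp [crossVertex]⟩
  · exact ⟨j, i, h.symm, by cases σ <;> simp [crossVertex]⟩

theorem mem_edges_aisleWalk {σ : Bool} {i : Fin n} {x y : SBV n sz} :
    s(x, y) ∈ (aisleWalk σ i).edges ↔ adjIn (aislePath i) x y ∨ adjIn (aislePath i) y x := by
  have htrue : s(x, y) ∈ (aisleWalk true i).edges ↔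
      adjIn (aislePath i) x y ∨ adjIn (aislePath i) y x := by
    rw [← Walk.infix_support_iff_mem_edges, support_aisleWalk_true, pair_infix_iff_adjIn,
      pair_infix_iff_adjIn]
  cases σ
  · rw [aisleWalk_false, Walk.edges_reverse, List.mem_reverse, htrue]
  · exact htrue

theorem eq_crossVertex_or_eq_snd_of_adj {σ : Bool} {i : Fin n} {y : SBV n sz}
    (h : (warehouse n sz).Adj (crossVertex σ i) y) :
    (∃ j, (pathGraph n).Adj i j ∧ y = crossVertex σ j) ∨ y = (aisleWalk σ i).snd := by
  rcases h with ⟨a, b, hab, h⟩ | ⟨a, h⟩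
  · left
    have hadj : (pathGraph n).Adj a b := pathGraph_adj.2 (Or.inl hab.symm)
    have hiy : i = a ∧ y = crossVertex σ b ∨ i = b ∧ y = crossVertex σ a := by
      cases σ <;> simpa [crossVertex, top, bot] using h
    rcases hiy with ⟨rfl, hy⟩ | ⟨rfl, hy⟩
    · exact ⟨b, hadj, hy⟩
    · exact ⟨a, hadj.symm, hy⟩
  · right
    have hedge := mem_edges_aisleWalk (σ := σ).2 h
    have hmem := mem_support_aisleWalk.1 (Walk.fst_mem_support_of_mem_edges _ hedge)
    obtain rfl := crossVertex_mem_aislePath.1 hmem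
    exact (isPath_aisleWalk σ i).eq_snd_of_mem_edges hedge

variable {len : SBV n sz → SBV n sz → ℝ}

theorem pathLen_aisleWalk (hsymm : ∀ x y, len x y = len y x) (σ : Bool) (i : Fin n) :
    pathLen len (aisleWalk σ i).support = pathLen len (aislePath i) := by
  rw [← support_aisleWalk_true]
  cases σ
  · rw [aisleWalk_false, pathLen_support_reverse hsymm]
  · rfl

theorem len_crossVertex_not (hsymm : ∀ x y, len x y = len y x)
    (hcross : ∀ i j : Fin n, (j : ℕ) = (i : ℕ) + 1 → len (top i) (top j) = len (bot i) (bot j))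
    (σ : Bool) {i j : Fin n} (h : (pathGraph n).Adj i j) :
    len (crossVertex (!σ) i) (crossVertex (!σ) j) = len (crossVertex σ i) (crossVertex σ j) := by
  have htop : len (top i) (top j) = len (bot i) (bot j) := by
    rcases pathGraph_adj.1 h with h | h
    · exact hcross i j h.symm
    · rw [hsymm, hsymm (bot i), hcross j i h.symm]
  cases σ
  · exact htop
  · exact htop.symm

theorem exists_walk_to_snd_aisleWalk (hsymm : ∀ x y, len x y = len y x) (σ : Bool) (i : Fin n) :
    ∃ p : (warehouse n sz).Walk (crossVertex σ i) (aisleWalk (!σ) i).snd,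
      (∀ v ∈ aislePath i, IsPick v → v ∈ p.support) ∧
      pathLen len (aislePath i) =
        len (crossVertex (!σ) i) (aisleWalk (!σ) i).snd + pathLen len p.support := by
  have hnil := not_nil_aisleWalk (sz := sz) (!σ) i
  refine ⟨(aisleWalk (!σ) i).tail.reverse.copy (by rw [Bool.not_not]) rfl, fun v hv hpick => ?_, ?_⟩
  · rw [← mem_support_aisleWalk (σ := !σ), ← Walk.cons_support_tail hnil, List.mem_cons] at hv
    rcases hv with rfl | hv
    · exact absurd hpick (not_isPick_crossVertex _ _)
    · rwa [Walk.support_copy, Walk.support_reverse, List.mem_reverse]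
  · rw [Walk.support_copy, pathLen_support_reverse hsymm, ← pathLen_aisleWalk hsymm (!σ) i,
      ← pathLen_support_cons len (Walk.adj_snd hnil), Walk.cons_tail_eq _ hnil]

theorem exists_shorter_sweep (hsymm : ∀ x y, len x y = len y x)
    (hpos : ∀ x y, Adj x y → 0 < len x y) (σ : Bool) (i : Fin n) :
    ∃ p : (warehouse n sz).Walk (crossVertex σ i) (crossVertex σ i),
      (∀ v ∈ aislePath i, IsPick v → v ∈ p.support) ∧
      pathLen len p.support < 2 * pathLen len (aislePath i) := by
  obtain ⟨p, hpick, hlen⟩ := exists_walk_to_snd_aisleWalk hsymm σ i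
  have hlast := hpos _ _ (Walk.adj_snd (not_nil_aisleWalk (sz := sz) (!σ) i))
  refine ⟨p.append p.reverse, fun v hv hv' => by simp [hpick v hv hv'], ?_⟩
  rw [pathLen_support_append, pathLen_support_reverse hsymm]
  linarith

-- `m` is the mirror image of the part of `w` before it first enters an aisle, namely aisle `k`.
theorem forall_not_isPick_or_exists_mirror (hsymm : ∀ x y, len x y = len y x)
    (hcross : ∀ i j : Fin n, (j : ℕ) = (i : ℕ) + 1 → len (top i) (top j) = len (bot i) (bot j))
    {σ : Bool} {i : Fin n} {x z : SBV n sz} (w : (warehouse n sz).Walk x z)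
    (hx : x = crossVertex (!σ) i) :
    (∀ v ∈ w.support, ¬ IsPick v) ∨
      ∃ (k : Fin n) (m : (warehouse n sz).Walk (crossVertex σ i) (crossVertex σ k))
        (q : (warehouse n sz).Walk (aisleWalk (!σ) k).snd z),
        (∀ v ∈ w.support, IsPick v → v ∈ q.support) ∧
        pathLen len w.support = pathLen len m.support +
          len (crossVertex (!σ) k) (aisleWalk (!σ) k).snd + pathLen len q.support := by
  induction w generalizing i with
  | nil => exact Or.inl (by simpa [hx] using not_isPick_crossVertex (!σ) i)
  | cons h w ih =>
    subst hx
    have hstart := not_isPick_crossVertex (sz := sz) (!σ) i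
    rcases eq_crossVertex_or_eq_snd_of_adj h with ⟨j, hij, rfl⟩ | rfl
    · rcases ih rfl with hw | ⟨k, m, q, hq, hlen⟩
      · exact Or.inl (by simpa [hstart] using hw)
      · refine Or.inr ⟨k, m.cons (adj_crossVertex_crossVertex σ hij), q, ?_, ?_⟩
        · simpa [hstart] using hq
        · rw [pathLen_support_cons, pathLen_support_cons, hlen,
            len_crossVertex_not hsymm hcross σ hij]
          ring
    · refine Or.inr ⟨i, .nil, w, fun v hv hpick => ?_, ?_⟩
      · rw [Walk.support_cons, List.mem_cons] at hv
        exact hv.resolve_left fun hv => hstart (hv ▸ hpick)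
      · rw [pathLen_support_cons, Walk.support_nil, pathLen_singleton, zero_add]

theorem Better.append_left {s t u : SBV n sz} {p p' : (warehouse n sz).Walk t u}
    (h : Better len p'.support p.support) (a : (warehouse n sz).Walk s t) :
    Better len (a.append p').support (a.append p).support := by
  refine ⟨fun v hpick => ?_, by simpa using h.2⟩
  simpa only [Walk.mem_support_append_iff] using Or.imp_right (h.1 v hpick)

theorem Better.append_right {s t u : SBV n sz} {p p' : (warehouse n sz).Walk s t}
    (h : Better len p'.support p.support) (c : (warehouse n sz).Walk t u) :
    Better len (p'.append c).support (p.append c).support := by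
  refine ⟨fun v hpick => ?_, by simpa using h.2⟩
  simpa only [Walk.mem_support_append_iff] using Or.imp_left (h.1 v hpick)

theorem exists_better_of_same_direction (hsymm : ∀ x y, len x y = len y x)
    (hpos : ∀ x y, Adj x y → 0 < len x y) {σ : Bool} {i : Fin n}
    (b : (warehouse n sz).Walk (crossVertex (!σ) i) (crossVertex σ i)) :
    ∃ w : (warehouse n sz).Walk (crossVertex σ i) (crossVertex (!σ) i),
      Better len w.support ((aisleWalk σ i).append (b.append (aisleWalk σ i))).support := by
  obtain ⟨p, hpick, hlen⟩ := exists_shorter_sweep hsymm hpos σ i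
  refine ⟨p.append b.reverse, fun v hv => ?_, ?_⟩
  · have hpickv := hpick v
    simp only [Walk.mem_support_append_iff, mem_support_aisleWalk, Walk.support_reverse,
      List.mem_reverse]
    tauto
  · simp only [pathLen_support_append, pathLen_support_reverse hsymm, pathLen_aisleWalk hsymm]
    linarith

theorem exists_better_of_opposite_directions (hsymm : ∀ x y, len x y = len y x)
    (hpos : ∀ x y, Adj x y → 0 < len x y)
    (hcross : ∀ i j : Fin n, (j : ℕ) = (i : ℕ) + 1 → len (top i) (top j) = len (bot i) (bot j))
    (haisle : ∀ i i' : Fin n, pathLen len (aislePath i) = pathLen len (aislePath i'))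
    {σ : Bool} {i : Fin n}
    (b : (warehouse n sz).Walk (crossVertex (!σ) i) (crossVertex (!σ) i)) :
    ∃ w : (warehouse n sz).Walk (crossVertex σ i) (crossVertex σ i),
      Better len w.support ((aisleWalk σ i).append (b.append (aisleWalk σ i).reverse)).support := by
  rcases forall_not_isPick_or_exists_mirror hsymm hcross b rfl with hb | ⟨k, m, q, hq, hlen⟩
  · obtain ⟨p, hpick, hlt⟩ := exists_shorter_sweep hsymm hpos σ i
    refine ⟨p, fun v hv => ?_, ?_⟩
    · have hpickv := hpick v
      have hbv := hb v
      simp only [Walk.mem_support_append_iff, mem_support_aisleWalk, Walk.support_reverse,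
        List.mem_reverse]
      tauto
    · have hblen := pathLen_support_nonneg hpos b
      simp only [pathLen_support_append, pathLen_support_reverse hsymm, pathLen_aisleWalk hsymm]
      linarith
  · obtain ⟨p, -, hp⟩ := exists_walk_to_snd_aisleWalk hsymm σ k
    have hlast := hpos _ _ (Walk.adj_snd (not_nil_aisleWalk (sz := sz) (!σ) k))
    refine ⟨m.append (p.append (q.append (aisleWalk σ i).reverse)), fun v hv => ?_, ?_⟩
    · have hqv := hq v
      simp only [Walk.mem_support_append_iff, mem_support_aisleWalk, Walk.support_reverse,
        List.mem_reverse]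
      tauto
    · simp only [pathLen_support_append, pathLen_support_reverse hsymm, pathLen_aisleWalk hsymm,
        hlen, haisle i k]
      linarith

theorem exists_better_of_two_traversals (hsymm : ∀ x y, len x y = len y x)
    (hpos : ∀ x y, Adj x y → 0 < len x y)
    (hcross : ∀ i j : Fin n, (j : ℕ) = (i : ℕ) + 1 → len (top i) (top j) = len (bot i) (bot j))
    (haisle : ∀ i i' : Fin n, pathLen len (aislePath i) = pathLen len (aislePath i'))
    {σ τ : Bool} {i : Fin n} (b : (warehouse n sz).Walk (crossVertex (!σ) i) (crossVertex τ i)) :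
    ∃ w : (warehouse n sz).Walk (crossVertex σ i) (crossVertex (!τ) i),
      Better len w.support ((aisleWalk σ i).append (b.append (aisleWalk τ i))).support := by
  cases σ <;> cases τ
  · exact exists_better_of_same_direction hsymm hpos b
  · have hrev : (aisleWalk (sz := sz) false i).reverse = aisleWalk true i := Walk.reverse_reverse _
    exact hrev ▸ exists_better_of_opposite_directions hsymm hpos hcross haisle b
  · exact exists_better_of_opposite_directions hsymm hpos hcross haisle b
  · exact exists_better_of_same_direction hsymm hpos b

theorem optimal_tour_traverses_each_aisle_at_most_once_general
    (hsymm : ∀ x y, len x y = len y x)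
    (hpos : ∀ x y, Adj x y → 0 < len x y)
    (hcross : ∀ i j : Fin n, (j : ℕ) = (i : ℕ) + 1 → len (top i) (top j) = len (bot i) (bot j))
    (haisle : ∀ i i' : Fin n, pathLen len (aislePath i) = pathLen len (aislePath i'))
    {VR : Set (SBV n sz)} (hVR : ∀ v ∈ VR, IsPick v)
    {s t : SBV n sz} (w : (warehouse n sz).Walk s t) (hvis : ∀ v ∈ VR, v ∈ w.support)
    (hopt : ∀ w' : (warehouse n sz).Walk s t, (∀ v ∈ VR, v ∈ w'.support) →
      pathLen len w.support ≤ pathLen len w'.support) (i : Fin n) :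
    occCount (aislePath i) w.support + occCount (aislePath i).reverse w.support ≤ 1 := by
  have hnot (w' : (warehouse n sz).Walk s t) : ¬ Better len w'.support w.support := fun h =>
    (hopt w' fun v hv => h.1 v (hVR v hv) (hvis v hv)).not_gt h.2
  rw [← support_aisleWalk_false, ← support_aisleWalk_true,
    ← Fintype.sum_bool fun σ => occCount (aisleWalk σ i).support w.support]
  refine sum_occCount_le_one (fun σ τ p hσ hτ => ?_) fun σ τ p q hpq hσ hτ => ?_
  · refine crossVertex_left_injective (sz := sz) i (Option.some_inj.1 ?_)
    rw [← head?_eq_of_prefix_support hσ, ← head?_eq_of_prefix_support hτ]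
  · obtain ⟨a, b, c, rfl⟩ := exists_eq_append_of_disjoint_occurrences w _ _
      (fun h => not_isPick_crossVertex τ i (isPick_of_mem_interior_aisleWalk h)) hpq hσ hτ
    obtain ⟨p, hp⟩ := exists_better_of_two_traversals hsymm hpos hcross haisle b
    refine hnot (a.append (p.append c)) ?_
    simpa only [Walk.append_assoc] using (hp.append_right c).append_left a

end Warehouse

/-- Theorem 4: in a single-block warehouse graph (with symmetric positive edge
lengths, corresponding top and bottom cross-aisle edges of equal length, and
all aisle paths of equal total length), for any required set `VR` of picking
vertices, every optimal tour — i.e. every tour visiting all vertices of `VR`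
of minimum length among such tours — traverses each aisle at most once: for
each aisle `i` it contains at most one contiguous occurrence of the full
subpath `u_i v_{i1} … v_{i s_i} d_i` or of its reverse. -/
theorem optimal_tour_traverses_each_aisle_at_most_once
    {n : ℕ} {sz : Fin (n + 1) → ℕ}
    (len : SBV (n + 1) sz → SBV (n + 1) sz → ℝ)
    (hsymm : ∀ x y, len x y = len y x)
    (hpos : ∀ x y, Adj x y → 0 < len x y)
    (hcross : ∀ i j : Fin (n + 1), (j : ℕ) = (i : ℕ) + 1 →
      len (top i) (top j) = len (bot i) (bot j))
    (haisle : ∀ i i' : Fin (n + 1),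
      pathLen len (aislePath i) = pathLen len (aislePath i'))
    (VR : Set (SBV (n + 1) sz)) (hVR : ∀ v ∈ VR, IsPick v)
    (r : List (SBV (n + 1) sz)) (hr : IsTourFrom (top 0) r)
    (hvis : ∀ v ∈ VR, v ∈ r)
    (hopt : ∀ r', IsTourFrom (top 0) r' → (∀ v ∈ VR, v ∈ r') →
      pathLen len r ≤ pathLen len r') :
    ∀ i : Fin (n + 1),
      occCount (aislePath i) r + occCount (aislePath i).reverse r ≤ 1 := by
  intro i
  obtain ⟨w, rfl⟩ := isTourFrom_iff.1 hr
  exact optimal_tour_traverses_each_aisle_at_most_once_general hsymm hpos hcross haisle hVR w hvis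
    (fun w' => hopt _ (isTourFrom_iff.2 ⟨w', rfl⟩)) i

end SingleBlock
end

section
/- In a two-block warehouse graph, for any required set V_R of picking vertices there exists an optimal tour that traverses each subaisle i ∈ {2,3,…,W_sub} at most once (the topmost-left subaisle 1 may be traversed more than once). -/
namespace TwoBlock

/-- Vertices of a two-block warehouse with `n` vertical aisles and three
horizontal cross-aisles (`0` = top, `1` = middle, `2` = bottom).  Each aisle
`i` is split by the middle cross-aisle into a top subaisle `(i,0)` and a
bottom subaisle `(i,1)`; subaisle `(i,j)` contains `m i j + 1` picking
vertices.  `Sum.inl (i, j)` is the artificial vertex at aisle `i` on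
cross-aisle `j`; `Sum.inr ⟨i, j, k⟩` is the `k`-th picking vertex (from north
to south) of subaisle `(i,j)`. -/
abbrev TBV (n : ℕ) (m : Fin n → Fin 2 → ℕ) : Type :=
  (Fin n × Fin 3) ⊕ ((i : Fin n) × (j : Fin 2) × Fin (m i j + 1))

variable {n : ℕ} {m : Fin n → Fin 2 → ℕ}

/-- the artificial vertex at aisle `i` on cross-aisle `j` -/
def art (i : Fin n) (j : Fin 3) : TBV n m := Sum.inl (i, j)

/-- the `k`-th picking vertex of subaisle `(i,j)` -/
def pk (i : Fin n) (j : Fin 2) (k : Fin (m i j + 1)) : TBV n m := Sum.inr ⟨i, j, k⟩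

/-- `v` is a picking vertex -/
def IsPick (v : TBV n m) : Prop := ∃ i j k, v = pk i j k

/-- the full path through subaisle `(i,j)` from its northern endpoint to its
southern endpoint -/
def subPath (i : Fin n) (j : Fin 2) : List (TBV n m) :=
  art i j.castSucc :: ((List.ofFn fun k : Fin (m i j + 1) => pk i j k) ++ [art i j.succ])

/-- `x` and `y` occur consecutively (in this order) in the list `l` -/
def adjIn {α : Type*} (l : List α) (x y : α) : Prop :=
  ∃ p : ℕ, l[p]? = some x ∧ l[p + 1]? = some y

/-- adjacency in the two-block warehouse graph: neighboring artificial
vertices along each of the three cross-aisles, and consecutive vertices along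
each subaisle path -/
def Adj (x y : TBV n m) : Prop :=
  (∃ (i i' : Fin n) (j : Fin 3), (i' : ℕ) = (i : ℕ) + 1 ∧
    ((x = art i j ∧ y = art i' j) ∨ (x = art i' j ∧ y = art i j))) ∨
  (∃ i j, adjIn (subPath i j) x y ∨ adjIn (subPath i j) y x)

/-- the length of a walk, written as a list of vertices: the sum of the
lengths of its edges, counted with multiplicity -/
noncomputable def pathLen {α : Type*} (len : α → α → ℝ) (r : List α) : ℝ :=
  ((r.zip r.tail).map fun p => len p.1 p.2).sum

/-- a tour: a closed walk starting and ending at `s` -/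
def IsTourFrom (s : TBV n m) (r : List (TBV n m)) : Prop :=
  r.head? = some s ∧ r.getLast? = some s ∧ r.Chain' Adj

/-- the full path through subaisle `(i,j)` in the direction `dir`
(`true` = from north to south, `false` = from south to north) -/
def dirPath (i : Fin n) (j : Fin 2) (dir : Bool) : List (TBV n m) :=
  if dir then subPath i j else (subPath i j).reverse

/-- the tour `r` performs a full traversal of subaisle `(i,j)` in direction
`dir` starting at position `q` -/
def TravAt (r : List (TBV n m)) (q : ℕ) (i : Fin n) (j : Fin 2) (dir : Bool) : Prop :=
  dirPath i j dir <+: r.drop q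

/-- `r` is a no-reversal tour: whenever it enters a subaisle it traverses it
completely from one endpoint to the other, i.e. every occurrence of a picking
vertex lies inside a contiguous full traversal of its subaisle -/
def NoReversal (r : List (TBV n m)) : Prop :=
  ∀ (p : ℕ) (i : Fin n) (j : Fin 2) (k : Fin (m i j + 1)),
    r[p]? = some (pk i j k) →
      ∃ q dir, TravAt r q i j dir ∧ q ≤ p ∧ p < q + (subPath (m := m) i j).length

/-- the tour `r` traverses subaisle `(i,j)` (at least once) -/
def Traverses (r : List (TBV n m)) (i : Fin n) (j : Fin 2) : Prop :=
  ∃ q dir, TravAt r q i j dir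

/-- `K1` (resp. `K2`) is the set of aisles whose top (resp. bottom) subaisle
contains a required picking vertex; `r` traverses every required subaisle at
least once -/
def TraversesAll (K1 K2 : Finset (Fin n)) (r : List (TBV n m)) : Prop :=
  (∀ a ∈ K1, Traverses r a 0) ∧ (∀ a ∈ K2, Traverses r a 1)

/-- `v` is a picking vertex (Boolean version) -/
def isPickV : TBV n m → Bool := fun v =>
  match v with
  | Sum.inr _ => true
  | Sum.inl _ => false

/-- the total vertical distance of a tour: the sum of the lengths of all
subaisle (vertical) edges it traverses, counted with multiplicity -/
noncomputable def vertLen (len : TBV n m → TBV n m → ℝ) (r : List (TBV n m)) : ℝ :=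
  ((r.zip r.tail).map fun p =>
    if isPickV p.1 || isPickV p.2 then len p.1 p.2 else 0).sum

/-- number of contiguous occurrences of `seg` in `r` -/
def occCount {α : Type*} [DecidableEq α] (seg r : List α) : ℕ :=
  ((List.range r.length).filter fun p => seg.isPrefixOf (r.drop p)).length

/-!
By Euler's theorem, a tour through the required vertices is the same as a multigraph of edges with
even degrees whose component of `s` contains the required vertices. Among the shortest such
multigraphs, take one with the fewest edges on the top and bottom cross-aisles. Suppose that it
contains every edge of a subaisle at least twice, and that the outer endpoint `a` of this subaisle
need not be visited. If `a` is on an edge to `a'` of the outer cross-aisle, this edge and one copy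
of the subaisle can be exchanged for the corresponding edge of the middle cross-aisle and the
neighboring subaisle, which has the same length, against the choice of the multigraph. Otherwise `a`
is a dead end, which can be pruned. So every subaisle other than the one at `s` has an edge of
multiplicity at most one, and is traversed at most once.
-/

open SimpleGraph

section Euler

variable {V : Type*} {G : SimpleGraph V} {u v : V}

/-- The simple graph underlying a multigraph.  Throughout, a multigraph on `V` is encoded as the
multiset of its edges, so that multiplicities are counts. -/
def underlying (w : Multiset (Sym2 V)) : SimpleGraph V := fromEdgeSet {e | e ∈ w}

lemma underlying_adj {w : Multiset (Sym2 V)} : (underlying w).Adj u v ↔ s(u, v) ∈ w ∧ u ≠ v := by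
  simp [underlying]

lemma reachable_underlying_of_mem {w : Multiset (Sym2 V)} (h : s(u, v) ∈ w) :
    (underlying w).Reachable u v := by
  rcases eq_or_ne u v with rfl | hne
  · exact .rfl
  · exact (underlying_adj.2 ⟨h, hne⟩).reachable

lemma reachable_underlying_of_walk {w : Multiset (Sym2 V)} (p : G.Walk u v)
    (hp : ∀ e ∈ p.edges, e ∈ w) : (underlying w).Reachable u v := by
  refine ⟨p.transfer _ fun e he => ?_⟩
  simpa [underlying, hp e he] using G.not_isDiag_of_mem_edgeSet (p.edges_subset_edgeSet he)

lemma reachable_map_of_adj {W : Type*} {H : SimpleGraph W} (f : V → W)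
    (hf : ∀ x y, G.Adj x y → H.Reachable (f x) (f y)) (h : G.Reachable u v) :
    H.Reachable (f u) (f v) := by
  simp only [reachable_iff_reflTransGen] at hf h ⊢
  exact h.lift' f hf

lemma exists_closed_walk_edges_eq_add (p : G.Walk u u) (hv : v ∈ p.support) (q : G.Walk v v) :
    ∃ r : G.Walk u u, (r.edges : Multiset (Sym2 V)) = p.edges + q.edges := by
  classical
  refine ⟨(p.takeUntil v hv).append (q.append (p.dropUntil v hv)), ?_⟩
  conv_rhs => rw [← p.take_spec hv]
  simp only [Walk.edges_append, ← Multiset.coe_add]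
  abel

variable [DecidableEq V]

lemma even_countP_edges_iff (p : G.Walk u v) (x : V) :
    Even (p.edges.countP (x ∈ ·)) ↔ (u = x ↔ v = x) := by
  induction p with
  | nil => simp
  | cons huv p ih =>
    have := huv.ne
    simp only [Walk.edges_cons, List.countP_cons, Sym2.mem_iff]
    grind

lemma even_countP_erase_iff {w : Multiset (Sym2 V)} (he : s(u, v) ∈ w) (hne : u ≠ v) (x : V) :
    Even ((w.erase s(u, v)).countP (x ∈ ·)) ↔ (Even (w.countP (x ∈ ·)) ↔ (u = x ↔ v = x)) := by
  conv_rhs => rw [← Multiset.cons_erase he, Multiset.countP_cons]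
  simp only [Sym2.mem_iff]
  grind

lemma exists_walk_edges_le {w : Multiset (Sym2 V)} (hG : ∀ e ∈ w, e ∈ G.edgeSet)
    (hw : ∀ x, Even (w.countP (x ∈ ·)) ↔ (u = x ↔ v = x)) :
    ∃ p : G.Walk u v, (p.edges : Multiset (Sym2 V)) ≤ w := by
  induction w using Multiset.strongInductionOn generalizing u with
  | ih w ih =>
    rcases eq_or_ne u v with rfl | huv
    · exact ⟨.nil, by simp⟩
    have hdeg : 0 < w.countP (u ∈ ·) :=
      Nat.pos_of_ne_zero fun h => by simpa [h, huv.symm] using hw u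
    obtain ⟨e, he, hue⟩ := Multiset.countP_pos.1 hdeg
    obtain ⟨x, rfl⟩ := Sym2.mem_iff_exists.1 hue
    have hux : G.Adj u x := hG _ he
    obtain ⟨p, hp⟩ := ih (u := x) _ (Multiset.erase_lt.2 he)
      (fun e he => hG e (Multiset.mem_of_mem_erase he)) fun y => by
        rw [even_countP_erase_iff he hux.ne, hw y]
        tauto
    refine ⟨.cons hux p, ?_⟩
    rw [Walk.edges_cons, ← Multiset.cons_coe, ← Multiset.cons_erase he]
    exact Multiset.cons_le_cons _ hp

lemma exists_closed_walk_edges_le {w : Multiset (Sym2 V)} (hG : ∀ e ∈ w, e ∈ G.edgeSet)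
    (hw : ∀ x, Even (w.countP (x ∈ ·))) (huv : s(u, v) ∈ w) :
    ∃ p : G.Walk u u, p.edges ≠ [] ∧ (p.edges : Multiset (Sym2 V)) ≤ w := by
  have hadj : G.Adj u v := hG _ huv
  obtain ⟨p, hp⟩ := exists_walk_edges_le (u := v) (v := u) (w := w.erase s(u, v))
    (fun e he => hG e (Multiset.mem_of_mem_erase he)) fun x => by
      simp only [even_countP_erase_iff huv hadj.ne, hw x, true_iff]
      exact iff_comm
  refine ⟨.cons hadj p, by simp, ?_⟩
  rw [Walk.edges_cons, ← Multiset.cons_coe, ← Multiset.cons_erase huv]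
  exact Multiset.cons_le_cons _ hp

lemma even_countP_sub_edges {w : Multiset (Sym2 V)} (hw : ∀ x, Even (w.countP (x ∈ ·)))
    (p : G.Walk u u) (hp : (p.edges : Multiset (Sym2 V)) ≤ w) (x : V) :
    Even ((w - p.edges).countP (x ∈ ·)) := by
  rw [Multiset.countP_sub hp, Multiset.coe_countP, Nat.even_sub
    (by simpa using Multiset.countP_le_of_le _ hp)]
  simp [hw, even_countP_edges_iff]

/-- Hierholzer's argument: a closed walk leaving the fewest edges of `w` unused cannot miss an edge
of `w` at one of its vertices, since the unused edges have even degrees and would contain a closed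
walk to splice in there. -/
lemma exists_closed_walk_through_component {w : Multiset (Sym2 V)}
    (hG : ∀ e ∈ w, e ∈ G.edgeSet) (hw : ∀ x, Even (w.countP (x ∈ ·))) (s : V) :
    ∃ p : G.Walk s s, (p.edges : Multiset (Sym2 V)) ≤ w ∧
      ∀ v, (underlying w).Reachable s v → v ∈ p.support := by
  obtain ⟨p, hp, hmin⟩ := exists_minimalFor_of_wellFoundedLT
    (fun p : G.Walk s s => (p.edges : Multiset (Sym2 V)) ≤ w) (fun p => w - p.edges) ⟨.nil, by simp⟩
  refine ⟨p, hp, fun v hv => ?_⟩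
  rw [reachable_iff_reflTransGen] at hv
  induction hv with
  | refl => exact p.start_mem_support
  | @tail x y _ hxy hx =>
    by_contra hy
    have hunused : s(x, y) ∈ w - (p.edges : Multiset (Sym2 V)) := by
      rw [Multiset.mem_sub, Multiset.coe_count,
        List.count_eq_zero.2 fun h => hy (p.snd_mem_support_of_mem_edges h)]
      exact Multiset.count_pos.2 (underlying_adj.1 hxy).1
    obtain ⟨q, hq, hqle⟩ := exists_closed_walk_edges_le
      (fun e he => hG e (Multiset.mem_of_le (Multiset.sub_le_self _ _) he))
      (even_countP_sub_edges hw p hp) hunused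
    obtain ⟨r, hr⟩ := exists_closed_walk_edges_eq_add p hx q
    have hle : w - (p.edges : Multiset (Sym2 V)) ≤ w - p.edges - q.edges := by
      rw [tsub_tsub, ← hr]
      refine hmin (j := r) ?_ ?_
      · beta_reduce
        rw [hr, add_comm]
        exact (le_tsub_iff_right hp).1 hqle
      · beta_reduce
        rw [hr, ← tsub_tsub]
        exact tsub_le_self
    have hcard := Multiset.card_le_card hle
    rw [Multiset.card_sub hqle] at hcard
    have := Multiset.card_le_card hqle
    have : 0 < (q.edges : Multiset (Sym2 V)).card := List.length_pos_iff.2 hq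
    omega

end Euler

section Weight

/-- The total length of the elements of the multiset `w`, where `L` is the length of one element. -/
noncomputable def weight {α : Type*} (L : α → ℝ) (w : Multiset α) : ℝ := (w.map L).sum

variable {α : Type*} {L : α → ℝ} {u w : Multiset α}

lemma weight_add (u w : Multiset α) : weight L (u + w) = weight L u + weight L w := by
  simp [weight]

lemma weight_le_of_le (hL : ∀ e ∈ w, 0 ≤ L e) (h : u ≤ w) :
    weight L u ≤ weight L w := by
  obtain ⟨c, rfl⟩ := Multiset.le_iff_exists_add.1 h
  rw [weight_add, le_add_iff_nonneg_right]
  exact Multiset.sum_nonneg fun x hx => by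
    obtain ⟨e, he, rfl⟩ := Multiset.mem_map.1 hx
    exact hL e (Multiset.mem_add.2 (.inr he))

lemma weight_lt_of_lt (hL : ∀ e ∈ w, 0 < L e) (h : u < w) :
    weight L u < weight L w := by
  obtain ⟨e, he⟩ := Multiset.lt_iff_cons_le.1 h
  calc weight L u < L e + weight L u :=
        lt_add_of_pos_left _ (hL e (Multiset.mem_of_le he (Multiset.mem_cons_self e u)))
    _ = weight L (e ::ₘ u) := by simp [weight]
    _ ≤ weight L w := weight_le_of_le (fun e he => (hL e he).le) he

end Weight

section TourMultigraph

variable {V : Type*} [DecidableEq V] {G : SimpleGraph V} {s : V} {T : Set V}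
  {w A B : Multiset (Sym2 V)}

/-- The multigraph `w` on edges of `G` has even degrees, and its component of `s` contains `T`;
by Euler's theorem, it then contains the edges of a closed walk from `s` through `T`. -/
structure IsTourMultigraph (G : SimpleGraph V) (s : V) (T : Set V) (w : Multiset (Sym2 V)) :
    Prop where
  mem_edgeSet : ∀ e ∈ w, e ∈ G.edgeSet
  even_countP : ∀ v, Even (w.countP (v ∈ ·))
  reachable : ∀ v ∈ T, (underlying w).Reachable s v

lemma isTourMultigraph_edges (p : G.Walk s s) (hp : ∀ v ∈ T, v ∈ p.support) :
    IsTourMultigraph G s T p.edges where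
  mem_edgeSet _ he := p.edges_subset_edgeSet he
  even_countP v := by simp [even_countP_edges_iff]
  reachable v hv := reachable_underlying_of_walk (p.takeUntil v (hp v hv)) fun e he => by
    simpa using p.edges_takeUntil_subset_edges (hp v hv) he

namespace IsTourMultigraph

lemma exists_walk (hw : IsTourMultigraph G s T w) :
    ∃ p : G.Walk s s, (p.edges : Multiset (Sym2 V)) ≤ w ∧ ∀ v ∈ T, v ∈ p.support := by
  obtain ⟨p, hp, hsupp⟩ := exists_closed_walk_through_component hw.mem_edgeSet hw.even_countP s
  exact ⟨p, hp, fun v hv => hsupp v (hw.reachable v hv)⟩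

lemma exchange (hw : IsTourMultigraph G s T w) (hA : A ≤ w) (hB : ∀ e ∈ B, e ∈ G.edgeSet)
    (heven : ∀ v, Even ((A + B).countP (v ∈ ·)))
    (hconn : ∀ x y, s(x, y) ∈ A → (underlying (w - A + B)).Reachable x y) :
    IsTourMultigraph G s T (w - A + B) where
  mem_edgeSet e he := (Multiset.mem_add.1 he).elim
    (fun he => hw.mem_edgeSet e (Multiset.mem_of_le tsub_le_self he)) (hB e)
  even_countP v := by
    have hsum := congrArg (Multiset.countP (v ∈ ·)) (tsub_add_cancel_of_le hA)
    have hwv := hw.even_countP v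
    have hABv := heven v
    simp only [Multiset.countP_add] at hsum hABv ⊢
    grind
  reachable v hv := by
    refine reachable_map_of_adj id (fun x y hxy => ?_) (hw.reachable v hv)
    have hmem := (underlying_adj.1 hxy).1
    rw [← tsub_add_cancel_of_le hA, Multiset.mem_add] at hmem
    exact hmem.elim
      (fun h => reachable_underlying_of_mem (Multiset.mem_add.2 (.inl h))) (hconn x y)

lemma filter_notMem_of_forall_eq {v p : V} (hw : IsTourMultigraph G s T w) (hvs : v ≠ s)
    (hvT : v ∉ T) (hv : ∀ e ∈ w, v ∈ e → e = s(v, p)) :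
    IsTourMultigraph G s T (w.filter (v ∉ ·)) where
  mem_edgeSet e he := hw.mem_edgeSet e (Multiset.mem_filter.1 he).1
  even_countP x := by
    have hpend : w.filter (v ∈ ·) = w.countP (v ∈ ·) • {s(v, p)} := by
      rw [Multiset.countP_eq_card_filter, Multiset.nsmul_singleton]
      exact Multiset.eq_replicate_card.2 fun e he =>
        hv e (Multiset.mem_filter.1 he).1 (Multiset.mem_filter.1 he).2
    have hpendx : Even ((w.filter (v ∈ ·)).countP (x ∈ ·)) := by
      rw [hpend, Multiset.countP_nsmul]
      exact (hw.even_countP v).mul_right _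
    have hwx := hw.even_countP x
    rwa [← Multiset.filter_add_not (v ∈ ·) w, Multiset.countP_add, Nat.even_add,
      iff_true_left hpendx] at hwx
  reachable x hx := by
    have hmap := reachable_map_of_adj (H := underlying (w.filter (v ∉ ·)))
      (fun y => if y = v then p else y) (fun y z hyz => ?_) (hw.reachable x hx)
    · simpa [hvs.symm, show x ≠ v by grind] using hmap
    · have hmem := (underlying_adj.1 hyz).1
      by_cases hvyz : v ∈ s(y, z)
      · have := hv _ hmem hvyz
        have : (if y = v then p else y) = if z = v then p else z := by grind
        rw [this]
      · rw [Sym2.mem_iff, not_or] at hvyz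
        rw [if_neg (Ne.symm hvyz.1), if_neg (Ne.symm hvyz.2)]
        exact reachable_underlying_of_mem (Multiset.mem_filter.2 ⟨hmem, by simpa using hvyz⟩)

lemma exists_ne_of_minimal {v p : V} (hw : Minimal (IsTourMultigraph G s T) w) (hvs : v ≠ s)
    (hvT : v ∉ T) (hvp : s(v, p) ∈ w) : ∃ e ∈ w, v ∈ e ∧ e ≠ s(v, p) := by
  by_contra! hv
  have hpruned := hw.prop.filter_notMem_of_forall_eq hvs hvT hv
  have hmem := Multiset.mem_of_le (hw.le_of_le hpruned (Multiset.filter_le _ w)) hvp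
  simp at hmem

lemma exists_of_preconnected [Finite V] (hG : G.Preconnected) (s : V) (T : Set V) :
    ∃ w, IsTourMultigraph G s T w := by
  classical
  have := Fintype.ofFinite V
  refine ⟨2 • G.edgeFinset.val, fun e he => ?_, fun v => ?_, fun v _ => ?_⟩
  · simpa using Multiset.mem_of_mem_nsmul he
  · simp
  · obtain ⟨p⟩ := hG s v
    refine reachable_underlying_of_walk p fun e he => ?_
    simpa [Multiset.mem_nsmul] using p.edges_subset_edgeSet he

lemma count_le_two_of_minimal (hw : Minimal (IsTourMultigraph G s T) w) (e : Sym2 V) :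
    w.count e ≤ 2 := by
  by_contra! hcount
  have hA : 2 • {e} ≤ w := by
    rw [Multiset.nsmul_singleton]
    exact Multiset.le_count_iff_replicate_le.1 hcount.le
  have hmem : e ∈ w - 2 • {e} := by simpa [Multiset.mem_sub] using hcount
  have hsub : IsTourMultigraph G s T (w - 2 • {e}) := by
    simpa using hw.prop.exchange hA (B := 0) (by simp) (fun v => by simp) fun x y hxy => by
      rw [add_zero]
      refine reachable_underlying_of_mem ?_
      rwa [Multiset.mem_singleton.1 (Multiset.mem_of_mem_nsmul hxy)]
  have hcount_le := Multiset.count_le_of_le e (hw.le_of_le hsub tsub_le_self)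
  simp only [Multiset.count_sub, Multiset.count_nsmul, Multiset.count_singleton_self] at hcount_le
  omega

end IsTourMultigraph

variable {L : Sym2 V → ℝ}

/-- Among the multigraphs of the tours from `s` through `T`, the multigraph `w` has the least
weight. -/
structure IsOptimal (L : Sym2 V → ℝ) (G : SimpleGraph V) (s : V) (T : Set V)
    (w : Multiset (Sym2 V)) : Prop extends IsTourMultigraph G s T w where
  weight_le : ∀ u, IsTourMultigraph G s T u → weight L w ≤ weight L u

lemma IsOptimal.minimal (hL : ∀ e ∈ G.edgeSet, 0 < L e) (hw : IsOptimal L G s T w) :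
    Minimal (IsTourMultigraph G s T) w := by
  refine minimal_iff_forall_lt.2 ⟨hw.toIsTourMultigraph, fun u hu hfeas => ?_⟩
  exact (weight_lt_of_lt (fun e he => hL e (hw.mem_edgeSet e he)) hu).not_ge (hw.weight_le u hfeas)

lemma IsOptimal.of_weight_le {u : Multiset (Sym2 V)} (hw : IsOptimal L G s T w)
    (hu : IsTourMultigraph G s T u) (h : weight L u ≤ weight L w) : IsOptimal L G s T u where
  toIsTourMultigraph := hu
  weight_le u' hu' := h.trans (hw.weight_le u' hu')

lemma exists_isOptimal [Finite V] (hG : G.Preconnected) (hL : ∀ e ∈ G.edgeSet, 0 ≤ L e) (s : V)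
    (T : Set V) : ∃ w, IsOptimal L G s T w := by
  have := Fintype.ofFinite V
  have hfin : {w | Minimal (IsTourMultigraph G s T) w}.Finite :=
    (Set.finite_Iic (2 • Finset.univ.val)).subset fun w hw => by
      refine Multiset.le_iff_count.2 fun e => ?_
      simpa using IsTourMultigraph.count_le_two_of_minimal hw e
  obtain ⟨w₀, hw₀⟩ := IsTourMultigraph.exists_of_preconnected hG s T
  obtain ⟨w₁, -, hw₁⟩ := exists_minimal_le_of_wellFoundedLT _ w₀ hw₀
  obtain ⟨w, hw, hmin⟩ := hfin.exists_minimalFor (weight L) _ ⟨w₁, hw₁⟩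
  refine ⟨w, hw.prop, fun u hu => ?_⟩
  obtain ⟨u', hle, hu'⟩ := exists_minimal_le_of_wellFoundedLT _ u hu
  exact (le_of_not_gt fun hlt => (hmin hu' hlt.le).not_gt hlt).trans
    (weight_le_of_le (fun e he => hL e (hu.mem_edgeSet e he)) hle)

end TourMultigraph

section Occurrences

variable {α : Type*}

lemma adjIn_iff_infix {l : List α} {x y : α} : adjIn l x y ↔ [x, y] <:+: l := by
  rw [adjIn, List.infix_iff_getElem?]
  refine ⟨fun ⟨p, hx, hy⟩ => ⟨p, by grind⟩, fun ⟨p, _, hp⟩ => ⟨p, ?_⟩⟩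
  have := hp 0
  have := hp 1
  grind

variable [DecidableEq α]

lemma occCount_cons (l r : List α) (x : α) :
    occCount l (x :: r) = (if l <+: x :: r then 1 else 0) + occCount l r := by
  simp only [occCount, ← List.countP_eq_length_filter, List.length_cons, List.range_succ_eq_map,
    List.countP_cons, List.countP_map, List.drop_zero, List.isPrefixOf_iff_prefix]
  rw [add_comm]
  rfl

lemma occCount_le_of_prefix {l l' : List α} (h : l' <+: l) (r : List α) :
    occCount l r ≤ occCount l' r := by
  simp only [occCount, ← List.countP_eq_length_filter]
  exact List.countP_mono_left fun p _ hp => by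
    rw [List.isPrefixOf_iff_prefix] at hp ⊢
    exact h.trans hp

lemma occCount_cons_cons_le {l : List α} (hl : l ≠ []) (a x : α) (r : List α) :
    occCount (a :: l) (x :: r) ≤ occCount l r := by
  induction r generalizing x with
  | nil => simp [hl, occCount]
  | cons y r ih =>
    rw [occCount_cons, occCount_cons l]
    gcongr ?_ + ?_
    · simp only [List.cons_prefix_cons]
      grind
    · exact ih y

lemma occCount_le_of_suffix {l l' : List α} (hl' : l' ≠ []) (h : l' <:+ l) (r : List α) :
    occCount l r ≤ occCount l' r := by
  induction l with
  | nil => simp_all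
  | cons a l ih =>
    rcases List.suffix_cons_iff.1 h with rfl | h
    · rfl
    refine le_trans ?_ (ih h)
    cases r with
    | nil => simp [occCount]
    | cons x r =>
      calc occCount (a :: l) (x :: r) ≤ occCount l r :=
            occCount_cons_cons_le (fun hl => hl' (by simpa [hl] using h)) a x r
        _ ≤ occCount l (x :: r) := by rw [occCount_cons]; exact Nat.le_add_left _ _

lemma occCount_le_of_infix {l l' : List α} (hl' : l' ≠ []) (h : l' <:+: l) (r : List α) :
    occCount l r ≤ occCount l' r := by
  obtain ⟨t, hpre, hsuff⟩ := List.infix_iff_prefix_suffix.1 h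
  have ht : t ≠ [] := fun ht => hl' (List.prefix_nil.1 (ht ▸ hpre))
  exact (occCount_le_of_suffix ht hsuff r).trans (occCount_le_of_prefix hpre r)

end Occurrences

section WalkLists

variable {V : Type*} {G : SimpleGraph V} {a b u v : V}

lemma pathLen_support {len : V → V → ℝ} (hsymm : ∀ x y, len x y = len y x) (p : G.Walk u v) :
    pathLen len p.support = weight (Sym2.lift ⟨len, hsymm⟩) p.edges := by
  induction p with
  | nil => simp [pathLen, weight]
  | cons h p ih =>
    rw [weight, Multiset.map_coe, Multiset.sum_coe] at ih ⊢
    simp only [Walk.support_cons, Walk.edges_cons, List.map_cons, List.sum_cons, ← ih]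
    cases p <;> simp [pathLen]

variable [DecidableEq V]

lemma occCount_pair_add_swap (p : G.Walk u v) {x y : V} (hxy : x ≠ y) :
    occCount [x, y] p.support + occCount [y, x] p.support = p.edges.count s(x, y) := by
  induction p with
  | nil => simp [occCount]
  | @cons u v w h p ih =>
    rw [Walk.support_cons, Walk.edges_cons, List.count_cons, ← ih, occCount_cons, occCount_cons]
    cases p <;> simp <;> grind

lemma occCount_support_add_reverse_le (q : G.Walk a b) (p : G.Walk u v) {e : Sym2 V}
    (he : e ∈ q.edges) :
    occCount q.support p.support + occCount q.support.reverse p.support ≤ p.edges.count e := by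
  have hinfix {x y : V} (hxy : x ≠ y) (h : [x, y] <:+: q.support) :
      occCount q.support p.support + occCount q.support.reverse p.support ≤
        p.edges.count s(x, y) := by
    rw [← occCount_pair_add_swap p hxy]
    exact add_le_add (occCount_le_of_infix (by simp) h _)
      (occCount_le_of_infix (by simp) (List.reverse_infix.2 h) _)
  induction e with | _ x y
  have hxy := (q.adj_of_mem_edges he).ne
  rcases Walk.infix_support_iff_mem_edges.2 he with h | h
  · exact hinfix hxy h
  · exact Sym2.eq_swap ▸ hinfix hxy.symm h

end WalkLists

section Slide

variable {V : Type*} {G : SimpleGraph V} {s : V} {T : Set V} {w : Multiset (Sym2 V)}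
  {a b a' b' : V}

lemma cons_edges_le {p : G.Walk a b} (hp : p.IsTrail) {e : Sym2 V} (he : e ∉ p.edges)
    (hew : e ∈ w) (hpw : ∀ f ∈ p.edges, f ∈ w) : e ::ₘ (p.edges : Multiset (Sym2 V)) ≤ w := by
  rw [Multiset.le_iff_subset (by simpa [he] using hp.edges_nodup)]
  exact Multiset.cons_subset.2 ⟨hew, hpw⟩

variable [DecidableEq V]

/-- The two multigraphs exchanged here form the closed walk `a → b → b' → a' → a`.  The doubled path
`p` keeps one copy, so `a` and `a'` stay connected through `b` and `b'`. -/
lemma IsTourMultigraph.slide (hw : IsTourMultigraph G s T w) {p : G.Walk a b} (hp : p.IsTrail)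
    (p' : G.Walk a' b') (ha : s(a, a') ∈ w) (hap : s(a, a') ∉ p.edges) (hb : G.Adj b b')
    (hpw : ∀ e ∈ p.edges, 2 ≤ w.count e) :
    IsTourMultigraph G s T (w - s(a, a') ::ₘ ↑p.edges + s(b, b') ::ₘ ↑p'.edges) := by
  have haa' : G.Adj a a' := hw.mem_edgeSet _ ha
  let detour : G.Walk a a' := p.append (.cons hb p'.reverse)
  have hclosed : s(a, a') ::ₘ ↑p.edges + s(b, b') ::ₘ ↑p'.edges =
      ((Walk.cons haa'.symm detour).edges : Multiset (Sym2 V)) := by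
    rw [Walk.edges_cons, Walk.edges_append, Walk.edges_cons, Walk.edges_reverse, Sym2.eq_swap,
      ← Multiset.cons_coe, ← Multiset.coe_add, ← Multiset.cons_coe, Multiset.coe_reverse,
      Multiset.cons_add]
  have hkept (e) (he : e ∈ p.edges) : e ∈ w - s(a, a') ::ₘ ↑p.edges := by
    rw [Multiset.mem_sub, Multiset.count_cons_of_ne (by grind), Multiset.coe_count,
      List.count_eq_one_of_mem hp.edges_nodup he]
    exact hpw e he
  refine hw.exchange (cons_edges_le hp hap ha fun e he => ?_) (fun e he => ?_) (fun v => ?_)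
    (fun x y hxy => ?_)
  · exact Multiset.mem_of_le tsub_le_self (hkept e he)
  · rcases Multiset.mem_cons.1 he with rfl | he
    exacts [hb, p'.edges_subset_edgeSet he]
  · rw [hclosed, Multiset.coe_countP, even_countP_edges_iff]
  · rcases Multiset.mem_cons.1 hxy with h | h
    · suffices hdetour : (underlying
          (w - s(a, a') ::ₘ ↑p.edges + s(b, b') ::ₘ ↑p'.edges)).Reachable a a' by
        rcases Sym2.eq_iff.1 h with ⟨rfl, rfl⟩ | ⟨rfl, rfl⟩
        exacts [hdetour, hdetour.symm]
      refine reachable_underlying_of_walk detour fun e he => ?_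
      rw [Walk.edges_append, List.mem_append, Walk.edges_cons, Walk.edges_reverse] at he
      exact Multiset.mem_add.2 (he.imp (hkept e) fun he => by simpa using he)
    · exact reachable_underlying_of_mem (Multiset.mem_add.2 (.inl (hkept _ h)))

end Slide

section Warehouse

lemma adj_symm {x y : TBV n m} (h : Adj x y) : Adj y x := by
  unfold Adj at h ⊢
  grind

lemma mem_subPath {i : Fin n} {j : Fin 2} {v : TBV n m} :
    v ∈ subPath i j ↔ v = art i j.castSucc ∨ (∃ k, v = pk i j k) ∨ v = art i j.succ := by
  simp [subPath, List.mem_ofFn, eq_comm, -List.ofFn_succ]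

lemma nodup_subPath (i : Fin n) (j : Fin 2) : (subPath i j : List (TBV n m)).Nodup := by
  simp [subPath, art, pk, List.nodup_append, List.nodup_ofFn, Function.Injective,
    Fin.castSucc_lt_succ.ne]

lemma exists_pk_of_adjIn_subPath {i : Fin n} {j : Fin 2} {x y : TBV n m}
    (h : adjIn (subPath i j) x y) : ∃ k, x = pk i j k ∨ y = pk i j k := by
  obtain ⟨p, hx, hy⟩ := h
  simp only [subPath] at hx hy
  cases p with
  | zero => exact ⟨0, .inr (by simpa using hy.symm)⟩
  | succ p =>
    have hp : p < m i j + 1 := by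
      have := (List.getElem?_eq_some_iff.1 hy).1
      simp at this
      omega
    refine ⟨⟨p, hp⟩, .inl ?_⟩
    rw [List.getElem?_cons_succ, List.getElem?_append_left (by simpa using hp)] at hx
    simpa [hp, -List.ofFn_succ] using hx.symm

/-- The two-block warehouse as a simple graph, so that its tours are closed walks. -/
def warehouseGraph (n : ℕ) (m : Fin n → Fin 2 → ℕ) : SimpleGraph (TBV n m) where
  Adj := Adj
  symm := ⟨fun _ _ => adj_symm⟩
  loopless := ⟨fun x h => by
    rcases h with ⟨i, i', c, hii', h⟩ | ⟨i, j, h⟩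
    · simp only [art] at h
      grind
    · have : [x, x] <:+: subPath i j := adjIn_iff_infix.1 (h.elim id id)
      simpa using (nodup_subPath i j).sublist this.sublist⟩

variable {i i' : Fin n} {j : Fin 2} {c c' : Fin 3}

lemma isTourFrom_iff {s : TBV n m} {r : List (TBV n m)} :
    IsTourFrom s r ↔ ∃ p : (warehouseGraph n m).Walk s s, p.support = r := by
  constructor
  · rintro ⟨hhead, hlast, hchain⟩
    replace hchain : r.IsChain (warehouseGraph n m).Adj := hchain
    have hr : r ≠ [] := by rintro rfl; simp at hhead
    exact ⟨(Walk.ofSupport r hr hchain).copy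
      (by simpa [List.head?_eq_some_head hr] using hhead)
      (by simpa [List.getLast?_eq_some_getLast hr] using hlast), by
        rw [Walk.support_copy, Walk.support_ofSupport]⟩
  · rintro ⟨p, rfl⟩
    refine ⟨?_, ?_, p.isChain_adj_support⟩
    · rw [List.head?_eq_some_head p.support_ne_nil, p.head_support]
    · rw [List.getLast?_eq_some_getLast p.support_ne_nil, p.getLast_support]

lemma subPath_ne_nil (i : Fin n) (j : Fin 2) : (subPath i j : List (TBV n m)) ≠ [] :=
  List.cons_ne_nil _ _

lemma isChain_adj_subPath (i : Fin n) (j : Fin 2) :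
    (subPath i j : List (TBV n m)).IsChain (warehouseGraph n m).Adj := by
  refine List.isChain_iff_getElem.2 fun p hp => .inr ⟨i, j, .inl ⟨p, ?_, ?_⟩⟩ <;> simp

/-- The walk through subaisle `(i, j)` from its northern to its southern endpoint. -/
def subaisleWalk (m : Fin n → Fin 2 → ℕ) (i : Fin n) (j : Fin 2) :
    (warehouseGraph n m).Walk (art i j.castSucc) (art i j.succ) :=
  (Walk.ofSupport (subPath i j) (subPath_ne_nil i j) (isChain_adj_subPath i j)).copy
    (by simp [subPath]) (by simp [subPath])

lemma support_subaisleWalk (i : Fin n) (j : Fin 2) :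
    (subaisleWalk m i j).support = subPath i j := by
  rw [subaisleWalk, Walk.support_copy, Walk.support_ofSupport]

/-- The cross-aisle bounding the block `j` from outside: the top one for `j = 0` and the bottom one
for `j = 1`. -/
def outer : Fin 2 → Fin 3 := ![0, 2]

/-- The walk through subaisle `(i, j)` from its outer endpoint to the middle cross-aisle. -/
def outerWalk (m : Fin n → Fin 2 → ℕ) (i : Fin n) :
    (j : Fin 2) → (warehouseGraph n m).Walk (art i (outer j)) (art i 1)
  | 0 => subaisleWalk m i 0
  | 1 => (subaisleWalk m i 1).reverse

lemma support_outerWalk (i : Fin n) (j : Fin 2) :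
    (outerWalk m i j).support = subPath i j ∨
      (outerWalk m i j).support = (subPath i j).reverse := by
  match j with
  | 0 => exact .inl (support_subaisleWalk i 0)
  | 1 => exact .inr ((Walk.support_reverse _).trans (congrArg _ (support_subaisleWalk i 1)))

lemma isPath_outerWalk (i : Fin n) (j : Fin 2) : (outerWalk m i j).IsPath := by
  rw [Walk.isPath_def]
  rcases support_outerWalk (m := m) i j with h | h <;> simp [h, nodup_subPath]

lemma mk_mem_edges_outerWalk {x y : TBV n m} :
    s(x, y) ∈ (outerWalk m i j).edges ↔ adjIn (subPath i j) x y ∨ adjIn (subPath i j) y x := by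
  rw [← Walk.infix_support_iff_mem_edges, adjIn_iff_infix, adjIn_iff_infix]
  rcases support_outerWalk (m := m) i j with h | h
  · rw [h]
  · rw [h, ← List.reverse_infix, ← List.reverse_infix (l₁ := [y, x])]
    simp [or_comm]

lemma exists_pk_mem_of_mem_edges_outerWalk {e : Sym2 (TBV n m)} (he : e ∈ (outerWalk m i j).edges) :
    ∃ k, pk i j k ∈ e := by
  induction e with | _ x y
  rcases mk_mem_edges_outerWalk.1 he with h | h
  all_goals
    obtain ⟨k, rfl | rfl⟩ := exists_pk_of_adjIn_subPath h <;> exact ⟨k, by simp⟩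

lemma warehouseGraph_adj {x y : TBV n m} :
    (warehouseGraph n m).Adj x y ↔
      (∃ i i' c, (pathGraph n).Adj i i' ∧ x = art i c ∧ y = art i' c) ∨
        ∃ i j, s(x, y) ∈ (outerWalk m i j).edges := by
  simp only [mk_mem_edges_outerWalk, pathGraph_adj]
  refine or_congr_left ⟨?_, ?_⟩
  · rintro ⟨i, i', c, h, ⟨rfl, rfl⟩ | ⟨rfl, rfl⟩⟩
    · exact ⟨i, i', c, .inl h.symm, rfl, rfl⟩
    · exact ⟨i', i, c, .inr h.symm, rfl, rfl⟩
  · rintro ⟨i, i', c, h | h, rfl, rfl⟩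
    · exact ⟨i, i', c, h.symm, .inl ⟨rfl, rfl⟩⟩
    · exact ⟨i', i, c, h.symm, .inr ⟨rfl, rfl⟩⟩

lemma adj_art_art (h : (pathGraph n).Adj i i') (c : Fin 3) :
    (warehouseGraph n m).Adj (art i c) (art i' c) :=
  warehouseGraph_adj.2 (.inl ⟨i, i', c, h, rfl, rfl⟩)

lemma mk_art_art_notMem_edges_outerWalk : s(art i c, art i' c') ∉ (outerWalk m i j).edges := by
  intro h
  obtain ⟨k, hk⟩ := exists_pk_mem_of_mem_edges_outerWalk h
  simp [pk, art] at hk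

lemma art_outer_mem_support_outerWalk {j' : Fin 2}
    (h : art i (outer j) ∈ (outerWalk m i' j').support) : i = i' ∧ j = j' := by
  have hmem : art i (outer j) ∈ (subPath i' j' : List (TBV n m)) := by
    rcases support_outerWalk (m := m) i' j' with h' | h' <;> simpa [h'] using h
  revert hmem
  fin_cases j <;> fin_cases j' <;> simp [mem_subPath, art, pk, outer]

lemma not_nil_outerWalk (i : Fin n) (j : Fin 2) : ¬(outerWalk m i j).Nil :=
  Walk.not_nil_of_ne (by fin_cases j <;> simp [art, outer])

lemma adj_art_outer {y : TBV n m} :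
    (warehouseGraph n m).Adj (art i (outer j)) y ↔
      (∃ i', (pathGraph n).Adj i i' ∧ y = art i' (outer j)) ∨ y = (outerWalk m i j).snd := by
  constructor
  · intro h
    rcases warehouseGraph_adj.1 h with ⟨k, k', c, hkk', hk, rfl⟩ | ⟨k, l, hkl⟩
    · obtain ⟨rfl, rfl⟩ : i = k ∧ outer j = c := by simpa [art] using hk
      exact .inl ⟨k', hkk', rfl⟩
    · obtain ⟨rfl, rfl⟩ := art_outer_mem_support_outerWalk (Walk.fst_mem_support_of_mem_edges _ hkl)
      exact .inr ((isPath_outerWalk i j).eq_snd_of_mem_edges hkl)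
  · rintro (⟨i', hii', rfl⟩ | rfl)
    exacts [adj_art_art hii' _, Walk.adj_snd (not_nil_outerWalk i j)]

lemma mk_snd_mem_edges_outerWalk (i : Fin n) (j : Fin 2) :
    s(art i (outer j), (outerWalk m i j).snd) ∈ (outerWalk m i j).edges :=
  Walk.mk_start_snd_mem_edges (not_nil_outerWalk i j)

lemma exists_mem_support_outerWalk (v : TBV n m) : ∃ i j, v ∈ (outerWalk m i j).support := by
  match v with
  | .inl (i, 0) => exact ⟨i, 0, Walk.start_mem_support _⟩
  | .inl (i, 1) => exact ⟨i, 0, Walk.end_mem_support _⟩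
  | .inl (i, 2) => exact ⟨i, 1, Walk.start_mem_support _⟩
  | .inr ⟨i, j, k⟩ =>
    have hk : pk i j k ∈ subPath i j := mem_subPath.2 (.inr (.inl ⟨k, rfl⟩))
    exact ⟨i, j, (support_outerWalk i j).elim (fun h => h ▸ hk)
      (fun h => h ▸ List.mem_reverse.2 hk)⟩

lemma art_outer_notMem_insert {n : ℕ} {m : Fin (n + 1) → Fin 2 → ℕ} {i : Fin (n + 1)} {j : Fin 2}
    {VR : Set (TBV (n + 1) m)} (hVR : ∀ v ∈ VR, IsPick v) (hij : ¬(i = 0 ∧ j = 0)) :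
    art i (outer j) ∉ insert (art 0 0) VR := by
  rintro (h | h)
  · obtain ⟨hi, hj⟩ : i = 0 ∧ outer j = 0 := by simpa [art] using h
    exact hij ⟨hi, by revert hj; fin_cases j <;> simp [outer]⟩
  · obtain ⟨i', j', k, hk⟩ := hVR _ h
    simp [art, pk] at hk

lemma warehouseGraph_preconnected : (warehouseGraph n m).Preconnected := by
  have hmiddle (v : TBV n m) : ∃ i, (warehouseGraph n m).Reachable v (art i 1) := by
    obtain ⟨i, j, hv⟩ := exists_mem_support_outerWalk v
    exact ⟨i, ⟨(outerWalk m i j).dropUntil v hv⟩⟩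
  intro u v
  obtain ⟨i, hu⟩ := hmiddle u
  obtain ⟨i', hv⟩ := hmiddle v
  have hii' : (warehouseGraph n m).Reachable (art i 1) (art i' 1) :=
    reachable_map_of_adj (art · 1) (fun _ _ h => (adj_art_art h 1).reachable)
      (pathGraph_preconnected n i i')
  exact hu.trans (hii'.trans hv.symm)

lemma weight_edges_outerWalk {len : TBV n m → TBV n m → ℝ} (hsymm : ∀ x y, len x y = len y x)
    (i : Fin n) (j : Fin 2) :
    weight (Sym2.lift ⟨len, hsymm⟩) (outerWalk m i j).edges = pathLen len (subPath i j) := by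
  rw [← support_subaisleWalk, pathLen_support hsymm]
  match j with
  | 0 => rfl
  | 1 => exact congrArg (weight _) ((congrArg _ (Walk.edges_reverse _)).trans
      (Multiset.coe_reverse _))

lemma occCount_subPath_add_reverse_le {u v : TBV n m} (p : (warehouseGraph n m).Walk u v)
    {e : Sym2 (TBV n m)} (he : e ∈ (outerWalk m i j).edges) :
    occCount (subPath i j) p.support + occCount (subPath i j).reverse p.support ≤
      p.edges.count e := by
  have hocc := occCount_support_add_reverse_le (outerWalk m i j) p he
  rcases support_outerWalk (m := m) i j with h | h
  · rwa [h] at hocc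
  · rwa [h, List.reverse_reverse, add_comm] at hocc

open Classical in
/-- The number of edges of `w`, with multiplicity, on the top and bottom cross-aisles. An optimal
multigraph minimizing it makes full use of the middle cross-aisle. -/
noncomputable def outerCount (w : Multiset (Sym2 (TBV n m))) : ℕ :=
  w.countP fun e => ∀ v ∈ e, ∃ i j, v = art i (outer j)

lemma outerCount_add (u w : Multiset (Sym2 (TBV n m))) :
    outerCount (u + w) = outerCount u + outerCount w := by
  simp only [outerCount, Multiset.countP_add]

lemma outerCount_edges_outerWalk (i : Fin n) (j : Fin 2) :
    outerCount ((outerWalk m i j).edges : Multiset (Sym2 (TBV n m))) = 0 := by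
  classical
  refine Multiset.countP_eq_zero.2 fun e he h => ?_
  obtain ⟨k, hk⟩ := exists_pk_mem_of_mem_edges_outerWalk he
  obtain ⟨i, j, hij⟩ := h _ hk
  simp [pk, art] at hij

lemma outerCount_cons_outer (i i' : Fin n) (j : Fin 2) (w : Multiset (Sym2 (TBV n m))) :
    outerCount (s(art i (outer j), art i' (outer j)) ::ₘ w) = outerCount w + 1 := by
  classical
  refine Multiset.countP_cons_of_pos _ (Sym2.ball.2 ?_)
  exact ⟨⟨i, j, rfl⟩, i', j, rfl⟩

lemma outerCount_cons_middle (i i' : Fin n) (w : Multiset (Sym2 (TBV n m))) :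
    outerCount (s(art i 1, art i' 1) ::ₘ w) = outerCount w := by
  classical
  exact Multiset.countP_cons_of_neg _ (by simp [art, outer])

variable {L : Sym2 (TBV n m) → ℝ} {s : TBV n m} {T : Set (TBV n m)}
  {w : Multiset (Sym2 (TBV n m))}

lemma IsOptimal.exists_outerCount_lt
    (hcross : ∀ k k', (pathGraph n).Adj k k' → ∀ c c',
      L s(art k c, art k' c) = L s(art k c', art k' c'))
    (hvert : ∀ k k' j, weight L (outerWalk m k j).edges = weight L (outerWalk m k' j).edges)
    (hw : IsOptimal L (warehouseGraph n m) s T w)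
    (hdouble : ∀ e ∈ (outerWalk m i j).edges, 2 ≤ w.count e) (hii' : (pathGraph n).Adj i i')
    (hmem : s(art i (outer j), art i' (outer j)) ∈ w) :
    ∃ u, IsOptimal L (warehouseGraph n m) s T u ∧ outerCount u < outerCount w := by
  set A := s(art i (outer j), art i' (outer j)) ::ₘ
    ((outerWalk m i j).edges : Multiset (Sym2 (TBV n m))) with hA
  set B := s(art i 1, art i' 1) ::ₘ ((outerWalk m i' j).edges : Multiset (Sym2 (TBV n m))) with hB
  have hslide : IsTourMultigraph (warehouseGraph n m) s T (w - A + B) :=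
    hw.slide (isPath_outerWalk i j).isTrail _ hmem mk_art_art_notMem_edges_outerWalk
      (adj_art_art hii' 1) hdouble
  have hAw : w - A + A = w := tsub_add_cancel_of_le <|
    cons_edges_le (isPath_outerWalk i j).isTrail mk_art_art_notMem_edges_outerWalk hmem
      fun e he => Multiset.count_pos.1 (two_pos.trans_le (hdouble e he))
  have hweight : weight L B = weight L A := by
    have hcons (e : Sym2 (TBV n m)) (u) : weight L (e ::ₘ u) = L e + weight L u := by simp [weight]
    rw [hA, hB, hcons, hcons, hcross i i' hii' 1 (outer j), hvert i' i j]
  refine ⟨w - A + B, hw.of_weight_le hslide ?_, ?_⟩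
  · conv_rhs => rw [← hAw]
    rw [weight_add, weight_add, hweight]
  · conv_rhs => rw [← hAw]
    rw [outerCount_add, outerCount_add, hA, hB, outerCount_cons_outer, outerCount_cons_middle,
      outerCount_edges_outerWalk, outerCount_edges_outerWalk]
    omega

lemma exists_mem_edges_outerWalk_count_le_one (hL : ∀ e ∈ (warehouseGraph n m).edgeSet, 0 < L e)
    (hcross : ∀ k k', (pathGraph n).Adj k k' → ∀ c c',
      L s(art k c, art k' c) = L s(art k c', art k' c'))
    (hvert : ∀ k k' j, weight L (outerWalk m k j).edges = weight L (outerWalk m k' j).edges)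
    (hw : MinimalFor (IsOptimal L (warehouseGraph n m) s T) outerCount w)
    (hij : art i (outer j) ∉ insert s T) : ∃ e ∈ (outerWalk m i j).edges, w.count e ≤ 1 := by
  by_contra! hdouble
  rw [Set.mem_insert_iff, not_or] at hij
  have hsnd : s(art i (outer j), (outerWalk m i j).snd) ∈ w :=
    Multiset.count_pos.1 (zero_lt_one.trans (hdouble _ (mk_snd_mem_edges_outerWalk i j)))
  obtain ⟨e, hew, he, hne⟩ :=
    IsTourMultigraph.exists_ne_of_minimal (hw.prop.minimal hL) hij.1 hij.2 hsnd
  obtain ⟨y, rfl⟩ := Sym2.mem_iff_exists.1 he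
  rcases adj_art_outer.1 (hw.prop.mem_edgeSet _ hew) with ⟨i', hii', rfl⟩ | rfl
  · obtain ⟨u, hu, hlt⟩ := hw.prop.exists_outerCount_lt hcross hvert hdouble hii' hew
    exact hlt.not_ge (hw.le_of_le hu hlt.le)
  · exact hne rfl

theorem exists_optimal_tour_single_traversing_general (len : TBV n m → TBV n m → ℝ)
    (hsymm : ∀ x y, len x y = len y x) (hpos : ∀ x y, Adj x y → 0 < len x y)
    (hcross : ∀ i i' : Fin n, (i' : ℕ) = (i : ℕ) + 1 →
      ∀ c c' : Fin 3, len (art i c) (art i' c) = len (art i c') (art i' c'))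
    (hvert : ∀ i i' j, pathLen len (subPath i j) = pathLen len (subPath i' j))
    (s : TBV n m) (VR : Set (TBV n m)) :
    ∃ r, IsTourFrom s r ∧ (∀ v ∈ VR, v ∈ r) ∧
      (∀ r', IsTourFrom s r' → (∀ v ∈ VR, v ∈ r') → pathLen len r ≤ pathLen len r') ∧
      ∀ i j, art i (outer j) ∉ insert s VR →
        occCount (subPath i j) r + occCount (subPath i j).reverse r ≤ 1 := by
  set L : Sym2 (TBV n m) → ℝ := Sym2.lift ⟨len, hsymm⟩
  have hL (e) (he : e ∈ (warehouseGraph n m).edgeSet) : 0 < L e := by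
    induction e with | _ x y => exact hpos x y he
  have hcrossL (k k') (hk : (pathGraph n).Adj k k') (c c') :
      L s(art k c, art k' c) = L s(art k c', art k' c') := by
    rcases pathGraph_adj.1 hk with h | h
    · exact hcross k k' h.symm c c'
    · rw [Sym2.eq_swap, Sym2.eq_swap (a := art k c')]
      exact hcross k' k h.symm c c'
  have hvertL (k k' j) : weight L (outerWalk m k j).edges = weight L (outerWalk m k' j).edges := by
    rw [weight_edges_outerWalk, weight_edges_outerWalk, hvert k k' j]
  obtain ⟨w, hw⟩ := exists_minimalFor_of_wellFoundedLT _ outerCount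
    (exists_isOptimal warehouseGraph_preconnected (fun e he => (hL e he).le) s VR)
  obtain ⟨p, hpw, hVR⟩ := hw.prop.exists_walk
  refine ⟨p.support, isTourFrom_iff.2 ⟨p, rfl⟩, hVR, fun r' hr' hVR' => ?_, fun i j hij => ?_⟩
  · obtain ⟨p', rfl⟩ := isTourFrom_iff.1 hr'
    rw [pathLen_support hsymm, pathLen_support hsymm]
    calc weight L p.edges ≤ weight L w :=
          weight_le_of_le (fun e he => (hL e (hw.prop.mem_edgeSet e he)).le) hpw
      _ ≤ weight L p'.edges := hw.prop.weight_le _ (isTourMultigraph_edges p' hVR')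
  · obtain ⟨e, he, hcount⟩ := exists_mem_edges_outerWalk_count_le_one hL hcrossL hvertL hw hij
    calc occCount (subPath i j) p.support + occCount (subPath i j).reverse p.support
        ≤ p.edges.count e := occCount_subPath_add_reverse_le p he
      _ ≤ w.count e := by simpa using Multiset.count_le_of_le e hpw
      _ ≤ 1 := hcount

end Warehouse

/-- Theorem 5: in a two-block warehouse graph (with symmetric positive edge
lengths, corresponding horizontal edges on the three cross-aisles of equal
lengths, and every subaisle of the same vertical length `d`), for any required
set `VR` of picking vertices there exists an optimal tour — a tour visiting
all vertices of `VR` of minimum length among such tours — that traverses each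
subaisle other than the topmost-left subaisle `(0,0)` at most once. -/
theorem exists_optimal_tour_single_traversing
    {n : ℕ} {m : Fin (n + 1) → Fin 2 → ℕ}
    (len : TBV (n + 1) m → TBV (n + 1) m → ℝ) (d : ℝ)
    (hsymm : ∀ x y, len x y = len y x)
    (hpos : ∀ x y, Adj x y → 0 < len x y)
    (hcross : ∀ (i i' : Fin (n + 1)), (i' : ℕ) = (i : ℕ) + 1 →
      ∀ j j' : Fin 3, len (art i j) (art i' j) = len (art i j') (art i' j'))
    (hvert : ∀ i j, pathLen len (subPath i j) = d)
    (VR : Set (TBV (n + 1) m)) (hVR : ∀ v ∈ VR, IsPick v) :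
    ∃ r : List (TBV (n + 1) m),
      IsTourFrom (art 0 0) r ∧ (∀ v ∈ VR, v ∈ r) ∧
      (∀ r', IsTourFrom (art 0 0) r' → (∀ v ∈ VR, v ∈ r') →
        pathLen len r ≤ pathLen len r') ∧
      ∀ (i : Fin (n + 1)) (j : Fin 2), ¬(i = 0 ∧ j = 0) →
        occCount (subPath i j) r + occCount (subPath i j).reverse r ≤ 1 := by
  obtain ⟨r, htour, hvisit, hopt, honce⟩ := exists_optimal_tour_single_traversing_general len hsymm
    hpos hcross (fun i i' j => (hvert i j).trans (hvert i' j).symm) (art 0 0) VR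
  exact ⟨r, htour, hvisit, hopt, fun i j hij => honce i j (art_outer_notMem_insert hVR hij)⟩

end TwoBlock
end
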